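/- arXiv:1707.03770 — 11 statements merged into one kernel-verified Lean document; each statement's English description precedes it below -/
import Mathlib

section
/- Let A be an invertible real d×d matrix, let Σ_Δ be a real symmetric positive semidefinite d×d matrix, and let G be a real d×d matrix such that every eigenvalue λ ∈ ℂ of GA satisfies Re(λ) < −1/2. If Σ_G is a symmetric positive semidefinite matrix satisfying the Lyapunov equation (GA + ½I) Σ_G + Σ_G (GA + ½I)ᵀ + G Σ_Δ Gᵀ = 0, then Σ_G − Σ* is positive semidefinite, where Σ* := A⁻¹ Σ_Δ (A⁻¹)ᵀ. Moreover, for the choice G* = −A⁻¹ (for which G*A = −I satisfies the eigenvalue condition), Σ* itself satisfies the Lyapunov equation, so the lower bound Σ* is achieved. -/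
open Matrix

open Filter Topology

/-- In a complex Banach algebra, the powers of an element of spectral radius less than one
tend to zero. -/
theorem tendsto_pow_zero_of_spectralRadius_lt_one {R : Type*} [NormedRing R] [NormedAlgebra ℂ R]
    [CompleteSpace R] (a : R) (ha : spectralRadius ℂ a < 1) :
    Tendsto (fun k : ℕ => a ^ k) atTop (𝓝 0) := by
  obtain ⟨r, har, hr⟩ := ENNReal.lt_iff_exists_nnreal_btwn.mp ha
  have hr' : r < 1 := by exact_mod_cast hr
  have hev := (spectrum.pow_nnnorm_pow_one_div_tendsto_nhds_spectralRadius a).eventually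
    (gt_mem_nhds har)
  refine squeeze_zero_norm' ?_ (tendsto_pow_atTop_nhds_zero_of_lt_one r.2 hr')
  filter_upwards [hev, eventually_gt_atTop 0] with k hk hk0
  have hk0' : (0 : ℝ) < k := by exact_mod_cast hk0
  have h := ENNReal.rpow_le_rpow hk.le hk0'.le
  rw [← ENNReal.rpow_mul, one_div_mul_cancel hk0'.ne', ENNReal.rpow_one,
    ENNReal.rpow_natCast] at h
  exact_mod_cast h

namespace Matrix

variable {n : Type*} [Fintype n] [DecidableEq n]

open scoped Matrix.Norms.L2Operator in
/-- The powers of a complex matrix whose eigenvalues lie in the open unit disc tend to zero. -/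
theorem tendsto_pow_zero_of_eigenvalue_norm_lt_one (W : Matrix n n ℂ)
    (hW : ∀ (μ : ℂ) (v : n → ℂ), v ≠ 0 → W *ᵥ v = μ • v → ‖μ‖ < 1) :
    Tendsto (fun k : ℕ => W ^ k) atTop (𝓝 0) := by
  cases subsingleton_or_nontrivial (Matrix n n ℂ)
  · simpa only [Subsingleton.elim _ (0 : Matrix n n ℂ)] using tendsto_const_nhds
  refine tendsto_pow_zero_of_spectralRadius_lt_one W ?_
  refine spectrum.spectralRadius_lt_of_forall_lt (r := 1) W fun μ hμ => ?_
  rw [← Matrix.spectrum_toLin', ← Module.End.hasEigenvalue_iff_mem_spectrum] at hμ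
  obtain ⟨v, hv⟩ := hμ.exists_hasEigenvector
  exact hW μ v hv.2 (by simpa using hv.apply_eq_smul)

/-- If `D - W D Wᵀ` is positive semidefinite and the powers of `W` tend to zero, then the symmetric
matrix `D` is positive semidefinite. -/
theorem PosSemidef.of_stein {W D : Matrix n n ℝ} (hD : D.IsHermitian)
    (h : (D - W * D * Wᵀ).PosSemidef) (hW : Tendsto (fun k : ℕ => W ^ k) atTop (𝓝 0)) :
    D.PosSemidef := by
  have hpow (k : ℕ) : (D - W ^ k * D * (W ^ k)ᵀ).PosSemidef := by
    induction k with
    | zero => simpa using PosSemidef.zero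
    | succ k ih =>
      convert ih.add (h.mul_mul_conjTranspose_same (W ^ k)) using 1
      simp only [conjTranspose_eq_transpose_of_trivial, pow_succ, transpose_mul]
      noncomm_ring
  refine .of_dotProduct_mulVec_nonneg hD fun x => ?_
  have hlim : Tendsto (fun k : ℕ => star x ⬝ᵥ ((D - W ^ k * D * (W ^ k)ᵀ) *ᵥ x)) atTop
      (𝓝 (star x ⬝ᵥ ((D - 0 * D * 0ᵀ) *ᵥ x))) := by
    have hc : Continuous fun V : Matrix n n ℝ => star x ⬝ᵥ ((D - V * D * Vᵀ) *ᵥ x) := by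
      fun_prop
    exact (hc.tendsto 0).comp hW
  simpa using ge_of_tendsto' hlim fun k => (hpow k).dotProduct_mulVec_nonneg x

/-- An eigenvalue of the Cayley transform `(B - 1)⁻¹ (B + 1)` of a Hurwitz matrix `B` lies in the
open unit disc. -/
theorem norm_lt_one_of_cayley_eigenvector {B : Matrix n n ℂ}
    (hB : ∀ (μ : ℂ) (v : n → ℂ), v ≠ 0 → B *ᵥ v = μ • v → μ.re < 0)
    {μ : ℂ} {v : n → ℂ} (hv : v ≠ 0) (h : (B + 1) *ᵥ v = μ • ((B - 1) *ᵥ v)) : ‖μ‖ < 1 := by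
  rw [add_mulVec, sub_mulVec, one_mulVec, smul_sub] at h
  have hμ : 1 - μ ≠ 0 := by
    intro hμ
    obtain rfl : μ = 1 := (sub_eq_zero.mp hμ).symm
    rw [one_smul, one_smul] at h
    refine hv (funext fun i => ?_)
    have hi := congrFun h i
    simp only [Pi.add_apply, Pi.sub_apply] at hi
    simp only [Pi.zero_apply]
    linear_combination hi / 2
  have hre := hB (-(1 + μ) / (1 - μ)) v hv <| funext fun i => by
    have hi := congrFun h i
    simp only [Pi.add_apply, Pi.sub_apply, Pi.smul_apply, smul_eq_mul] at hi ⊢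
    field_simp
    linear_combination hi
  have hsq : 0 < Complex.normSq (1 - μ) := Complex.normSq_pos.mpr hμ
  rw [Complex.div_re, ← add_div, div_lt_iff₀ hsq, zero_mul] at hre
  rw [← sq_lt_one_iff₀ (norm_nonneg μ), Complex.sq_norm, Complex.normSq_apply]
  simp only [Complex.neg_re, Complex.neg_im, Complex.add_re, Complex.add_im, Complex.sub_re,
    Complex.sub_im, Complex.one_re, Complex.one_im] at hre
  linarith

/-- Lyapunov's theorem: a symmetric `D` with `B D + D Bᵀ = -Q`, `Q` positive semidefinite and `B`
Hurwitz, is positive semidefinite. -/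
theorem PosSemidef.of_lyapunov {B D Q : Matrix n n ℝ} (hD : D.IsHermitian) (hQ : Q.PosSemidef)
    (hB : ∀ (μ : ℂ) (v : n → ℂ), v ≠ 0 → B.map Complex.ofReal *ᵥ v = μ • v → μ.re < 0)
    (h : B * D + D * Bᵀ = -Q) : D.PosSemidef := by
  have hmap (V : Matrix n n ℝ) : V.map Complex.ofReal = Complex.ofRealHom.mapMatrix V := rfl
  have hunit : IsUnit (B - 1) := by
    rw [Matrix.isUnit_iff_isUnit_det, isUnit_iff_ne_zero]
    intro hdet
    obtain ⟨v, hv, hBv⟩ := Matrix.exists_mulVec_eq_zero_iff.mpr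
      (show (Complex.ofRealHom.mapMatrix (B - 1)).det = 0 by
        rw [← RingHom.map_det, hdet, map_zero])
    rw [map_sub, map_one, sub_mulVec, one_mulVec, sub_eq_zero] at hBv
    have := hB 1 v hv (by rw [hmap, hBv, one_smul])
    norm_num at this
  have hdet := (Matrix.isUnit_iff_isUnit_det _).mp hunit
  set W := (B - 1)⁻¹ * (B + 1) with hWdef
  have hW : (B - 1) * W = B + 1 := Matrix.mul_nonsing_inv_cancel_left _ _ hdet
  have hstein : D - W * D * Wᵀ = (B - 1)⁻¹ * ((2 : ℝ) • Q) * ((B - 1)⁻¹)ᵀ := by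
    have hcancel : (B - 1)⁻¹ * (B - 1) = 1 := Matrix.nonsing_inv_mul _ hdet
    have hcancelT : (B - 1)ᵀ * ((B - 1)⁻¹)ᵀ = 1 := by
      rw [← transpose_mul, hcancel, transpose_one]
    have hQ2 : (2 : ℝ) • Q = (B - 1) * D * (B - 1)ᵀ - (B + 1) * D * (B + 1)ᵀ := by
      rw [← neg_eq_iff_eq_neg.mpr h, two_smul]
      simp only [transpose_sub, transpose_add, transpose_one]
      noncomm_ring
    calc D - W * D * Wᵀ
        = (B - 1)⁻¹ * (B - 1) * D * ((B - 1)ᵀ * ((B - 1)⁻¹)ᵀ) - W * D * Wᵀ := by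
          rw [hcancel, hcancelT, one_mul, mul_one]
      _ = _ := by
          rw [hQ2, hWdef, transpose_mul]
          noncomm_ring
  refine .of_stein (W := W) hD ?_ ?_
  · rw [hstein]
    simpa only [conjTranspose_eq_transpose_of_trivial] using
      (hQ.smul (zero_le_two (α := ℝ))).mul_mul_conjTranspose_same (B - 1)⁻¹
  · have hC := tendsto_pow_zero_of_eigenvalue_norm_lt_one (W.map Complex.ofReal)
      fun μ v hv hWv => norm_lt_one_of_cayley_eigenvector hB hv <| by
        rw [← mulVec_smul, ← hWv, mulVec_mulVec]
        congr 1
        simpa only [hmap, map_mul, map_sub, map_add, map_one] using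
          (congrArg Complex.ofRealHom.mapMatrix hW).symm
    have hre := ((continuous_id.matrix_map Complex.continuous_re).tendsto
      (0 : Matrix n n ℂ)).comp hC
    convert hre using 1
    · ext k i j
      simp only [hmap, ← map_pow]
      simp
    · congr 1

end Matrix

/-- Optimality of the asymptotic covariance: any PSD solution `Σ_G` of the
Lyapunov equation dominates `Σ* = A⁻¹ Σ_Δ A⁻ᵀ`, and the bound is achieved by the
gain `G* = -A⁻¹` (for which `G*A = -I`), i.e. `Σ*` solves the corresponding
Lyapunov equation. -/
theorem stmt2 {d : ℕ}
    (A G SigmaDelta : Matrix (Fin d) (Fin d) ℝ)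
    (hA : IsUnit A)
    (hSigmaDelta : SigmaDelta.PosSemidef)
    (heig : ∀ (lam : ℂ) (v : Fin d → ℂ), v ≠ 0 →
      ((G * A).map (Complex.ofReal)).mulVec v = lam • v → lam.re < -(1/2 : ℝ))
    (SigmaG : Matrix (Fin d) (Fin d) ℝ)
    (hSigmaG : SigmaG.PosSemidef)
    (hLyap : (G * A + (1/2 : ℝ) • 1) * SigmaG + SigmaG * (G * A + (1/2 : ℝ) • 1)ᵀ
      + G * SigmaDelta * Gᵀ = 0) :
    (SigmaG - A⁻¹ * SigmaDelta * (A⁻¹)ᵀ).PosSemidef ∧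
    (-A⁻¹) * A = -1 ∧
    ((-A⁻¹) * A + (1/2 : ℝ) • 1) * (A⁻¹ * SigmaDelta * (A⁻¹)ᵀ)
      + (A⁻¹ * SigmaDelta * (A⁻¹)ᵀ) * ((-A⁻¹) * A + (1/2 : ℝ) • 1)ᵀ
      + (-A⁻¹) * SigmaDelta * (-A⁻¹)ᵀ = 0 := by
  have hdet := (Matrix.isUnit_iff_isUnit_det _).mp hA
  have hinv : A⁻¹ * A = 1 := Matrix.nonsing_inv_mul _ hdet
  have hinv' : A * A⁻¹ = 1 := Matrix.mul_nonsing_inv _ hdet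
  have hstar : (A⁻¹ * SigmaDelta * (A⁻¹)ᵀ).PosSemidef := by
    simpa only [conjTranspose_eq_transpose_of_trivial] using
      hSigmaDelta.mul_mul_conjTranspose_same A⁻¹
  refine ⟨?_, by rw [neg_mul, hinv], ?_⟩
  · have hQ : (G * A + 1) * (A⁻¹ * SigmaDelta * (A⁻¹)ᵀ) * (G * A + 1)ᵀ
        = G * SigmaDelta * Gᵀ + G * SigmaDelta * (A⁻¹)ᵀ + A⁻¹ * SigmaDelta * Gᵀ
          + A⁻¹ * SigmaDelta * (A⁻¹)ᵀ := by
      have h₁ : (G * A + 1) * A⁻¹ = G + A⁻¹ := by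
        rw [add_mul, mul_assoc, hinv', mul_one, one_mul]
      calc (G * A + 1) * (A⁻¹ * SigmaDelta * (A⁻¹)ᵀ) * (G * A + 1)ᵀ
          = ((G * A + 1) * A⁻¹) * SigmaDelta * ((G * A + 1) * A⁻¹)ᵀ := by
            simp only [transpose_mul, mul_assoc]
        _ = _ := by
            rw [h₁, transpose_add]
            noncomm_ring
    have hGA : G * A * (A⁻¹ * SigmaDelta * (A⁻¹)ᵀ) = G * SigmaDelta * (A⁻¹)ᵀ := by
      simp only [mul_assoc, Matrix.mul_nonsing_inv_cancel_left _ _ hdet]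
    have hGAT : A⁻¹ * SigmaDelta * (A⁻¹)ᵀ * (G * A)ᵀ = A⁻¹ * SigmaDelta * Gᵀ := by
      rw [mul_assoc _ (A⁻¹)ᵀ, ← transpose_mul, mul_assoc G, hinv', mul_one]
    refine Matrix.PosSemidef.of_lyapunov (B := G * A + (1/2 : ℝ) • 1)
      (Q := (G * A + 1) * (A⁻¹ * SigmaDelta * (A⁻¹)ᵀ) * (G * A + 1)ᵀ)
      (hSigmaG.isHermitian.sub hstar.isHermitian) ?_ ?_ ?_
    · simpa only [conjTranspose_eq_transpose_of_trivial] using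
        hstar.mul_mul_conjTranspose_same (G * A + 1)
    · intro μ v hv hμ
      have hmap : (G * A + (1/2 : ℝ) • 1).map Complex.ofReal
          = (G * A).map Complex.ofReal + (1/2 : ℂ) • 1 := by
        ext i j
        simp [Matrix.one_apply, apply_ite]
      rw [hmap, add_mulVec, smul_mulVec, one_mulVec] at hμ
      have := heig (μ - 1/2) v hv (by rw [sub_smul, ← hμ, add_sub_cancel_right])
      norm_num at this
      linarith
    · rw [hQ]
      simp only [transpose_add, transpose_smul, transpose_one, add_mul, mul_add, smul_mul_assoc,
        mul_smul_comm, one_mul, mul_one, mul_sub, sub_mul, smul_sub, hGA, hGAT] at hLyap ⊢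
      linear_combination (norm := module) hLyap
  · rw [neg_mul, hinv]
    simp only [transpose_add, transpose_neg, transpose_smul, transpose_one, add_mul, mul_add,
      smul_mul_assoc, mul_smul_comm, one_mul, mul_one, neg_mul, mul_neg]
    module
end

section
/- Let d ≥ 1, let (A_n)_{n≥1} be a sequence of real d×d matrices and (b_n)_{n≥1} a sequence of vectors in ℝ^d. Define the running averages Â_n = (1/n) Σ_{i=1}^n A_i and b̂_n = (1/n) Σ_{i=1}^n b_i, and suppose Â_n is invertible for every n ≥ 1. Let θ_0 ∈ ℝ^d be arbitrary and define recursively θ_{n+1} = θ_n − (1/(n+1)) Â_{n+1}⁻¹ (A_{n+1} θ_n − b_{n+1}) for n ≥ 0. Then θ_n = Â_n⁻¹ b̂_n for every n ≥ 1. -/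
open Matrix Filter

/-- Stochastic Newton-Raphson recursion with step-size `α_n = 1/n` coincides with the
direct (running-average) estimates `θ_n = Â_n⁻¹ b̂_n`. -/
theorem stmt3 {d : ℕ} (hd : 1 ≤ d)
    (A : ℕ → Matrix (Fin d) (Fin d) ℝ) (b : ℕ → Fin d → ℝ)
    (Ahat : ℕ → Matrix (Fin d) (Fin d) ℝ) (bhat : ℕ → Fin d → ℝ)
    (hAhat : ∀ n, Ahat n = (n : ℝ)⁻¹ • ∑ i ∈ Finset.Icc 1 n, A i)
    (hbhat : ∀ n, bhat n = (n : ℝ)⁻¹ • ∑ i ∈ Finset.Icc 1 n, b i)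
    (hinv : ∀ n, 1 ≤ n → IsUnit (Ahat n))
    (θ : ℕ → Fin d → ℝ)
    (hrec : ∀ n : ℕ, θ (n + 1) = θ n - (1 / (n + 1 : ℝ)) •
      (Ahat (n + 1))⁻¹.mulVec ((A (n + 1)).mulVec (θ n) - b (n + 1))) :
    ∀ n, 1 ≤ n → θ n = (Ahat n)⁻¹.mulVec (bhat n) := by
  have hsum : ∀ n : ℕ, (∑ i ∈ Finset.Icc 1 n, A i) *ᵥ θ n = ∑ i ∈ Finset.Icc 1 n, b i := by
    intro n
    induction n with
    | zero => simp
    | succ n ih =>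
      have hn : (n + 1 : ℝ) ≠ 0 := by positivity
      have hS : ∑ i ∈ Finset.Icc 1 (n + 1), A i = (n + 1 : ℝ) • Ahat (n + 1) := by
        rw [hAhat, smul_smul]
        push_cast
        rw [mul_inv_cancel₀ hn, one_smul]
      have hdet := (Matrix.isUnit_iff_isUnit_det _).1 (hinv (n + 1) n.succ_pos)
      have hcorr : (∑ i ∈ Finset.Icc 1 (n + 1), A i) *ᵥ ((1 / (n + 1 : ℝ)) •
          (Ahat (n + 1))⁻¹ *ᵥ (A (n + 1) *ᵥ θ n - b (n + 1))) =
          A (n + 1) *ᵥ θ n - b (n + 1) := by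
        rw [hS, mulVec_smul, smul_mulVec, mulVec_mulVec, mul_nonsing_inv _ hdet, one_mulVec,
          smul_smul, one_div_mul_cancel hn, one_smul]
      rw [hrec, mulVec_sub, hcorr, Finset.sum_Icc_succ_top n.succ_pos,
        Finset.sum_Icc_succ_top n.succ_pos, add_mulVec, ih]
      abel
  intro n hn
  have hdet := (Matrix.isUnit_iff_isUnit_det _).1 (hinv n hn)
  have hb : bhat n = Ahat n *ᵥ θ n := by
    rw [hbhat, hAhat, smul_mulVec, hsum]
  rw [hb, mulVec_mulVec, nonsing_inv_mul _ hdet, one_mulVec]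
end

section
/- Let d ≥ 1, β ∈ (0,1), λ ∈ [0,1]. Let X be a set, (x_n)_{n≥0} a sequence in X, ψ : X → ℝ^d, and c : X → ℝ. Let ζ_0 ∈ ℝ^d and define ζ_{n+1} = λβ ζ_n + ψ(x_{n+1}) for n ≥ 0. Set A_i = ζ_{i−1} (β ψ(x_i) − ψ(x_{i−1}))ᵀ for i ≥ 1. Let Â_1 ∈ ℝ^{d×d} be arbitrary, and define recursively, with α_n = 1/n: Â_{n+1} = Â_n + α_{n+1}(A_{n+1} − Â_n) for n ≥ 1, and, starting from θ_0 = 0, θ_{n+1} = θ_n − α_{n+1} Â_{n+1}⁻¹ ζ_n d_{n+1} where d_{n+1} = c(x_n) + (β ψ(x_{n+1}) − ψ(x_n))ᵀ θ_n, for n ≥ 0 (assuming each Â_n, n ≥ 1, is invertible). Then for every n ≥ 1: Â_n = (1/n)(Σ_{i=1}^n A_i + ℰ_1) with ℰ_1 = Â_1 − A_1, and θ_n = Â_n⁻¹ b̂_n, where b̂_n = −(1/n) Σ_{i=1}^n ζ_{i−1} c(x_{i−1}). -/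
open Matrix

/-- The SNR-TD(λ) algorithm coincides with the LSTD(λ)-type direct estimates:
`Â_n = n⁻¹(Σ_{i=1}^n A_i + ℰ_1)` with `ℰ_1 = Â_1 - A_1`, and `θ_n = Â_n⁻¹ b̂_n`. -/
theorem stmt4 {d : ℕ} (hd : 1 ≤ d) {X : Type*}
    (β lam : ℝ) (hβ : β ∈ Set.Ioo (0 : ℝ) 1) (hlam : lam ∈ Set.Icc (0 : ℝ) 1)
    (xs : ℕ → X) (ψ : X → Fin d → ℝ) (c : X → ℝ)
    (ζ : ℕ → Fin d → ℝ)
    (hζ : ∀ n : ℕ, ζ (n + 1) = (lam * β) • ζ n + ψ (xs (n + 1)))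
    (A : ℕ → Matrix (Fin d) (Fin d) ℝ)
    (hA : ∀ i : ℕ, 1 ≤ i →
      A i = Matrix.vecMulVec (ζ (i - 1)) (β • ψ (xs i) - ψ (xs (i - 1))))
    (Ahat : ℕ → Matrix (Fin d) (Fin d) ℝ)
    (hAhat : ∀ n : ℕ, 1 ≤ n → Ahat (n + 1) = Ahat n + (1 / (n + 1 : ℝ)) • (A (n + 1) - Ahat n))
    (hinv : ∀ n : ℕ, 1 ≤ n → IsUnit (Ahat n))
    (θ : ℕ → Fin d → ℝ) (hθ0 : θ 0 = 0)
    (hθ : ∀ n : ℕ, θ (n + 1) = θ n - (1 / (n + 1 : ℝ)) •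
      ((c (xs n) + (β • ψ (xs (n + 1)) - ψ (xs n)) ⬝ᵥ θ n) •
        (Ahat (n + 1))⁻¹.mulVec (ζ n))) :
    ∀ n : ℕ, 1 ≤ n →
      Ahat n = (n : ℝ)⁻¹ • ((∑ i ∈ Finset.Icc 1 n, A i) + (Ahat 1 - A 1)) ∧
      θ n = (Ahat n)⁻¹.mulVec
        (-(n : ℝ)⁻¹ • ∑ i ∈ Finset.Icc 1 n, c (xs (i - 1)) • ζ (i - 1)) := by
  have hA_succ (n : ℕ) (v : Fin d → ℝ) :
      A (n + 1) *ᵥ v = ((β • ψ (xs (n + 1)) - ψ (xs n)) ⬝ᵥ v) • ζ n := by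
    rw [hA (n + 1) n.succ_pos, vecMulVec_mulVec, Nat.add_sub_cancel, op_smul_eq_smul]
  have hAhat_succ (n : ℕ) (hn : 1 ≤ n) :
      ((n + 1 : ℕ) : ℝ) • Ahat (n + 1) = (n : ℝ) • Ahat n + A (n + 1) := by
    have h0 : (n + 1 : ℝ) ≠ 0 := n.cast_add_one_ne_zero
    rw [hAhat n hn, Nat.cast_add_one, smul_add, smul_smul, mul_one_div_cancel h0]
    module
  have hθ_succ (n : ℕ) :
      (((n + 1 : ℕ) : ℝ) • Ahat (n + 1)) *ᵥ θ (n + 1) =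
        (((n + 1 : ℕ) : ℝ) • Ahat (n + 1)) *ᵥ θ n - A (n + 1) *ᵥ θ n - c (xs n) • ζ n := by
    have h0 : (n + 1 : ℝ) ≠ 0 := n.cast_add_one_ne_zero
    have hdet : IsUnit (Ahat (n + 1)).det :=
      (isUnit_iff_isUnit_det _).1 (hinv (n + 1) n.succ_pos)
    rw [hθ n, mulVec_sub, mulVec_smul, mulVec_smul, smul_mulVec _ _ (_ *ᵥ _), mulVec_mulVec,
      mul_nonsing_inv _ hdet, one_mulVec, hA_succ, Nat.cast_add_one,
      smul_comm _ (n + 1 : ℝ) (ζ n), smul_smul, one_div_mul_cancel h0]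
    module
  have hsum (n : ℕ) (hn : 1 ≤ n) :
      (n : ℝ) • Ahat n = (∑ i ∈ Finset.Icc 1 n, A i) + (Ahat 1 - A 1) := by
    induction n, hn using Nat.le_induction with
    | base => simp
    | succ n hn ih =>
      rw [hAhat_succ n hn, ih, Finset.sum_Icc_succ_top (by omega)]
      abel
  have hlin (n : ℕ) (hn : 1 ≤ n) :
      ((n : ℝ) • Ahat n) *ᵥ θ n = -∑ i ∈ Finset.Icc 1 n, c (xs (i - 1)) • ζ (i - 1) := by
    induction n, hn using Nat.le_induction with
    | base => simpa [hθ0] using hθ_succ 0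
    | succ n hn ih =>
      rw [hθ_succ, hAhat_succ n hn, add_mulVec, ih, Finset.sum_Icc_succ_top (by omega),
        Nat.add_sub_cancel]
      abel
  intro n hn
  have h0 : (n : ℝ) ≠ 0 := Nat.cast_ne_zero.2 (by omega)
  have hdet : IsUnit (Ahat n).det := (isUnit_iff_isUnit_det _).1 (hinv n hn)
  refine ⟨by rw [← hsum n hn, inv_smul_smul₀ h0], ?_⟩
  rw [neg_smul, ← smul_neg, ← hlin n hn, smul_mulVec, inv_smul_smul₀ h0, mulVec_mulVec,
    nonsing_inv_mul _ hdet, one_mulVec]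
end

section
/- Let X and U be finite nonempty sets, P a matrix with rows indexed by X×U and columns by X having nonnegative entries and each row summing to 1, and β ∈ (0,1). For every ς : X×U → ℝ there exists exactly one q : X×U → ℝ satisfying q(x,u) = ς(x,u) + β Σ_{x'} P((x,u),x') · min_{u'} q(x',u') for all (x,u); denote it Q(ς). The resulting map Q : ℝ^{X×U} → ℝ^{X×U} is a bijection, is monotone (if ς₁(x,u) ≤ ς₂(x,u) for all (x,u) then Q(ς₁)(x,u) ≤ Q(ς₂)(x,u) for all (x,u)), and is concave (for every t ∈ [0,1], Q(t ς₁ + (1−t) ς₂)(x,u) ≥ t Q(ς₁)(x,u) + (1−t) Q(ς₂)(x,u) for all (x,u)). -/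
/-- Expectation under `P p` of the pointwise minimum over actions of `q`. -/
noncomputable def expectedMin {X U : Type*} [Fintype X] (P : X × U → X → ℝ)
    (q : X × U → ℝ) (p : X × U) : ℝ :=
  ∑ x', P p x' * ⨅ u' : U, q (x', u')

section ExpectedMin

variable {X U : Type*} [Fintype X] [Fintype U] [Nonempty U] {P : X × U → X → ℝ}

theorem expectedMin_le_add_const (hP0 : ∀ p x', 0 ≤ P p x') (hP1 : ∀ p, ∑ x', P p x' = 1)
    {q₁ q₂ : X × U → ℝ} {c : ℝ} (h : ∀ p, q₁ p ≤ q₂ p + c) (p : X × U) :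
    expectedMin P q₁ p ≤ expectedMin P q₂ p + c := by
  have hmin : ∀ x, ⨅ u, q₁ (x, u) ≤ (⨅ u, q₂ (x, u)) + c := fun x => by
    rw [← sub_le_iff_le_add]
    exact le_ciInf fun u => sub_le_iff_le_add.2
      ((ciInf_le (Set.finite_range _).bddBelow u).trans (h (x, u)))
  calc expectedMin P q₁ p
      ≤ ∑ x', P p x' * ((⨅ u', q₂ (x', u')) + c) :=
        Finset.sum_le_sum fun x' _ => mul_le_mul_of_nonneg_left (hmin x') (hP0 p x')
    _ = expectedMin P q₂ p + c := by
        simp only [mul_add, Finset.sum_add_distrib, ← Finset.sum_mul, hP1, one_mul, expectedMin]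

theorem expectedMin_concave (hP0 : ∀ p x', 0 ≤ P p x') (q₁ q₂ : X × U → ℝ) {s t : ℝ}
    (hs : 0 ≤ s) (ht : 0 ≤ t) (p : X × U) :
    s * expectedMin P q₁ p + t * expectedMin P q₂ p ≤
      expectedMin P (fun p' => s * q₁ p' + t * q₂ p') p := by
  simp only [expectedMin, Finset.mul_sum, ← Finset.sum_add_distrib]
  refine Finset.sum_le_sum fun x _ => ?_
  have hmin : s * (⨅ u, q₁ (x, u)) + t * (⨅ u, q₂ (x, u)) ≤
      ⨅ u, (s * q₁ (x, u) + t * q₂ (x, u)) :=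
    le_ciInf fun u => add_le_add
      (mul_le_mul_of_nonneg_left (ciInf_le (Set.finite_range _).bddBelow u) hs)
      (mul_le_mul_of_nonneg_left (ciInf_le (Set.finite_range _).bddBelow u) ht)
  linarith [mul_le_mul_of_nonneg_left hmin (hP0 p x)]

/-- Comparison principle: a subsolution of the Bellman equation lies below any supersolution. -/
theorem bellman_comparison (hP0 : ∀ p x', 0 ≤ P p x') (hP1 : ∀ p, ∑ x', P p x' = 1)
    {β : ℝ} (hβ0 : 0 ≤ β) (hβ1 : β < 1) {ς q₁ q₂ : X × U → ℝ}
    (h₁ : ∀ p, q₁ p ≤ ς p + β * expectedMin P q₁ p)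
    (h₂ : ∀ p, ς p + β * expectedMin P q₂ p ≤ q₂ p) (p : X × U) : q₁ p ≤ q₂ p := by
  have : Nonempty (X × U) := ⟨p⟩
  obtain ⟨m, hm⟩ := Finite.exists_max fun p => q₁ p - q₂ p
  have hE := expectedMin_le_add_const hP0 hP1 (q₁ := q₁) (q₂ := q₂) (c := q₁ m - q₂ m)
    (fun p => by linarith [hm p]) m
  have hβE := mul_le_mul_of_nonneg_left hE hβ0
  have hM : q₁ m - q₂ m ≤ 0 := by nlinarith [h₁ m, h₂ m]
  linarith [hm p]

theorem bellman_exists (hP0 : ∀ p x', 0 ≤ P p x') (hP1 : ∀ p, ∑ x', P p x' = 1)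
    {β : ℝ} (hβ0 : 0 ≤ β) (hβ1 : β < 1) (ς : X × U → ℝ) :
    ∃ q : X × U → ℝ, ∀ p, q p = ς p + β * expectedMin P q p := by
  let T : (X × U → ℝ) → X × U → ℝ := fun q p => ς p + β * expectedMin P q p
  have hle : ∀ q₁ q₂ p, T q₁ p - T q₂ p ≤ β * dist q₁ q₂ := fun q₁ q₂ p => by
    have hE := expectedMin_le_add_const hP0 hP1 (q₁ := q₁) (q₂ := q₂) (c := dist q₁ q₂)
      (fun p => by
        have := (le_abs_self _).trans ((Real.dist_eq _ _).symm.le.trans (dist_le_pi_dist q₁ q₂ p))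
        linarith) p
    have hβE := mul_le_mul_of_nonneg_left hE hβ0
    simp only [T]
    linarith
  have hT : ContractingWith ⟨β, hβ0⟩ T := by
    refine ⟨by exact_mod_cast hβ1, LipschitzWith.of_dist_le_mul fun q₁ q₂ => ?_⟩
    refine (dist_pi_le_iff (mul_nonneg hβ0 dist_nonneg)).2 fun p => ?_
    rw [Real.dist_eq, abs_sub_le_iff]
    exact ⟨hle q₁ q₂ p, dist_comm q₁ q₂ ▸ hle q₂ q₁ p⟩
  exact ⟨hT.fixedPoint, fun p => (congrFun hT.fixedPoint_isFixedPt p).symm⟩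

end ExpectedMin

/-- The Q-function operator `ς ↦ Q(ς)` (the unique solution of the Bellman fixed
point equation) is well defined, bijective, monotone and concave. -/
theorem stmt5 {X U : Type*} [Fintype X] [Fintype U] [Nonempty X] [Nonempty U]
    (P : X × U → X → ℝ) (hP0 : ∀ p x', 0 ≤ P p x') (hP1 : ∀ p, ∑ x', P p x' = 1)
    (β : ℝ) (hβ : β ∈ Set.Ioo (0 : ℝ) 1) :
    (∀ ς : X × U → ℝ, ∃! q : X × U → ℝ,
        ∀ p, q p = ς p + β * ∑ x', P p x' * ⨅ u' : U, q (x', u')) ∧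
    ∀ Q : (X × U → ℝ) → (X × U → ℝ),
      (∀ ς p, Q ς p = ς p + β * ∑ x', P p x' * ⨅ u' : U, Q ς (x', u')) →
      Function.Bijective Q ∧
      (∀ ς₁ ς₂ : X × U → ℝ, (∀ p, ς₁ p ≤ ς₂ p) → ∀ p, Q ς₁ p ≤ Q ς₂ p) ∧
      (∀ ς₁ ς₂ : X × U → ℝ, ∀ t ∈ Set.Icc (0 : ℝ) 1, ∀ p,
        t * Q ς₁ p + (1 - t) * Q ς₂ p ≤
          Q (fun p' => t * ς₁ p' + (1 - t) * ς₂ p') p) := by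
  obtain ⟨hβ0, hβ1⟩ := hβ
  have compare := fun ς q₁ q₂ =>
    bellman_comparison (ς := ς) (q₁ := q₁) (q₂ := q₂) hP0 hP1 hβ0.le hβ1
  have unique : ∀ ς q₁ q₂ : X × U → ℝ, (∀ p, q₁ p = ς p + β * expectedMin P q₁ p) →
      (∀ p, q₂ p = ς p + β * expectedMin P q₂ p) → q₁ = q₂ := fun ς q₁ q₂ h₁ h₂ =>
    funext fun p => le_antisymm
      (compare ς q₁ q₂ (fun p => (h₁ p).le) (fun p => (h₂ p).ge) p)
      (compare ς q₂ q₁ (fun p => (h₂ p).le) (fun p => (h₁ p).ge) p)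
  refine ⟨fun ς => ?_, fun Q hQ => ?_⟩
  · obtain ⟨q, hq⟩ := bellman_exists hP0 hP1 hβ0.le hβ1 ς
    exact ⟨q, hq, fun q' hq' => unique ς q' q hq' hq⟩
  change ∀ ς p, Q ς p = ς p + β * expectedMin P (Q ς) p at hQ
  refine ⟨⟨fun ς₁ ς₂ h => funext fun p => ?_, fun q => ?_⟩, fun ς₁ ς₂ h => ?_,
    fun ς₁ ς₂ t ht => ?_⟩
  · have h₁ := hQ ς₁ p
    rw [h] at h₁
    linarith [hQ ς₂ p]
  · exact ⟨fun p => q p - β * expectedMin P q p,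
      unique _ _ _ (hQ _) fun p => (sub_add_cancel _ _).symm⟩
  · exact compare ς₂ _ _ (fun p => by linarith [hQ ς₁ p, h p]) fun p => (hQ ς₂ p).ge
  · refine compare _ (fun p => t * Q ς₁ p + (1 - t) * Q ς₂ p) _ (fun p => ?_) fun p => (hQ _ p).ge
    have hE := mul_le_mul_of_nonneg_left
      (expectedMin_concave hP0 (Q ς₁) (Q ς₂) ht.1 (sub_nonneg.2 ht.2) p) hβ0.le
    have h₁ := congrArg (t * ·) (hQ ς₁ p)
    have h₂ := congrArg ((1 - t) * ·) (hQ ς₂ p)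
    linarith
end

section
/- Let X and U be finite nonempty sets, P a matrix with rows indexed by X×U and columns by X having nonnegative entries and each row summing to 1, and β ∈ (0,1). Fix an enumeration φ^{(1)},…,φ^{(ℓ)} of all deterministic policies φ : X → U. For every ς : X×U → ℝ: (i) for every probability mass function μ on {1,…,ℓ}, the matrix M_μ := I − β P (Σ_i μ(i) S_{φ^{(i)}}) is invertible and Q(ς)(x,u) ≤ (M_μ⁻¹ ς)(x,u) for every (x,u); (ii) there exists a deterministic policy φ such that Q(ς) = (I − β P S_φ)⁻¹ ς. Hence Q(ς) = min_μ M_μ⁻¹ ς, and the minimum is attained by a degenerate (deterministic) μ. -/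
open Matrix

section Discounted

variable {ι : Type*} [Fintype ι] [DecidableEq ι]

/-- Discrete minimum principle for `1 - β K` with `K` stochastic. -/
theorem nonneg_of_nonneg_one_sub_smul_mulVec {K : Matrix ι ι ℝ} (hK : K ∈ rowStochastic ℝ ι)
    {β : ℝ} (hβ0 : 0 ≤ β) (hβ1 : β < 1) {w : ι → ℝ} (hw : 0 ≤ (1 - β • K) *ᵥ w) : 0 ≤ w := by
  intro p
  have : Nonempty ι := ⟨p⟩
  obtain ⟨m, hm⟩ := Finite.exists_min w
  have hsum : w m ≤ (K *ᵥ w) m := by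
    calc w m = ∑ j, K m j * w m := by
          rw [← Finset.sum_mul, sum_row_of_mem_rowStochastic hK, one_mul]
      _ ≤ ∑ j, K m j * w j := Finset.sum_le_sum fun j _ =>
          mul_le_mul_of_nonneg_left (hm j) (nonneg_of_mem_rowStochastic hK)
  have hwm := hw m
  simp only [sub_mulVec, one_mulVec, smul_mulVec, Pi.sub_apply, Pi.smul_apply, smul_eq_mul,
    Pi.zero_apply] at hwm
  have hmul := mul_le_mul_of_nonneg_left hsum hβ0
  have hm0 : 0 ≤ w m := by
    by_contra! hneg
    nlinarith
  exact hm0.trans (hm p)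

theorem isUnit_one_sub_smul_of_mem_rowStochastic {K : Matrix ι ι ℝ} (hK : K ∈ rowStochastic ℝ ι)
    {β : ℝ} (hβ0 : 0 ≤ β) (hβ1 : β < 1) : IsUnit (1 - β • K) := by
  rw [← mulVec_injective_iff_isUnit]
  intro v w hvw
  replace hvw : (1 - β • K) *ᵥ v = (1 - β • K) *ᵥ w := hvw
  apply le_antisymm <;> rw [← sub_nonneg] <;>
    exact nonneg_of_nonneg_one_sub_smul_mulVec hK hβ0 hβ1 (by rw [mulVec_sub, hvw, sub_self])

theorem le_inv_one_sub_smul_mulVec {K : Matrix ι ι ℝ} (hK : K ∈ rowStochastic ℝ ι)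
    {β : ℝ} (hβ0 : 0 ≤ β) (hβ1 : β < 1) {q c : ι → ℝ} (h : (1 - β • K) *ᵥ q ≤ c) :
    q ≤ (1 - β • K)⁻¹ *ᵥ c := by
  have hu := isUnit_one_sub_smul_of_mem_rowStochastic hK hβ0 hβ1
  rw [← sub_nonneg]
  apply nonneg_of_nonneg_one_sub_smul_mulVec hK hβ0 hβ1
  rwa [mulVec_sub, mulVec_mulVec, mul_nonsing_inv _ ((isUnit_iff_isUnit_det _).1 hu), one_mulVec,
    sub_nonneg]

end Discounted

theorem mul_mem_rowStochastic_of_rectangular {m n : Type*} [Fintype m] [Fintype n] [DecidableEq m]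
    {A : Matrix m n ℝ} {B : Matrix n m ℝ} (hA : ∀ i j, 0 ≤ A i j) (hB : ∀ i j, 0 ≤ B i j)
    (hA1 : A *ᵥ 1 = 1) (hB1 : B *ᵥ 1 = 1) : A * B ∈ rowStochastic ℝ m :=
  ⟨fun i j => Finset.sum_nonneg fun k _ => mul_nonneg (hA i k) (hB k j), by
    rw [← mulVec_mulVec, hB1, hA1]⟩

/-- `Q(ς)` is dominated by `M_μ⁻¹ ς` for every randomized stationary policy `μ`,
and equals `(I - β P S_φ)⁻¹ ς` for some deterministic policy `φ`; hence
`Q(ς) = min_μ M_μ⁻¹ ς`, the minimum being attained at a deterministic policy. -/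
theorem stmt6 {X U : Type*} [Fintype X] [Fintype U] [Nonempty X] [Nonempty U]
    [DecidableEq X] [DecidableEq U]
    (P : X × U → X → ℝ) (hP0 : ∀ p x', 0 ≤ P p x') (hP1 : ∀ p, ∑ x', P p x' = 1)
    (β : ℝ) (hβ : β ∈ Set.Ioo (0 : ℝ) 1)
    (ℓ : ℕ) (e : Fin ℓ ≃ (X → U))
    (Sm : (X → U) → Matrix X (X × U) ℝ)
    (hSm : ∀ (φ : X → U) (x : X) (p : X × U),
      Sm φ x p = if p.1 = x ∧ p.2 = φ x then 1 else 0)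
    (Pm : Matrix (X × U) X ℝ) (hPm : ∀ p x', Pm p x' = P p x')
    (ς q : X × U → ℝ)
    (hq : ∀ p, q p = ς p + β * ∑ x', P p x' * ⨅ u' : U, q (x', u')) :
    (∀ μ : Fin ℓ → ℝ, (∀ i, 0 ≤ μ i) → (∑ i, μ i = 1) →
      IsUnit ((1 : Matrix (X × U) (X × U) ℝ) - β • (Pm * ∑ i, μ i • Sm (e i))) ∧
      ∀ p, q p ≤ ((1 : Matrix (X × U) (X × U) ℝ)
          - β • (Pm * ∑ i, μ i • Sm (e i)))⁻¹.mulVec ς p) ∧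
    (∃ φ : X → U,
      q = ((1 : Matrix (X × U) (X × U) ℝ) - β • (Pm * Sm φ))⁻¹.mulVec ς) := by
  obtain ⟨hβ0, hβ1⟩ := hβ
  have hPm0 : ∀ p x', 0 ≤ Pm p x' := fun p x' => hPm p x' ▸ hP0 p x'
  have hPm1 : Pm *ᵥ 1 = 1 := by
    ext p
    simp [mulVec, dotProduct, hPm, hP1]
  have hSm0 : ∀ φ x p, 0 ≤ Sm φ x p := fun φ x p => by
    rw [hSm]
    split_ifs <;> simp
  have hSmv : ∀ (φ : X → U) (v : X × U → ℝ) (x : X), (Sm φ *ᵥ v) x = v (x, φ x) := by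
    intro φ v x
    simp [mulVec, dotProduct, hSm, ← Prod.mk_inj (b₂ := φ x)]
  have hqm : ∀ (S : Matrix X (X × U) ℝ) p, ((1 - β • (Pm * S)) *ᵥ q) p =
      ς p + β * (∑ x', P p x' * ⨅ u' : U, q (x', u')) - β * ∑ x', P p x' * (S *ᵥ q) x' := by
    intro S p
    have hPv : (Pm *ᵥ (S *ᵥ q)) p = ∑ x', P p x' * (S *ᵥ q) x' :=
      Finset.sum_congr rfl fun x' _ => congrArg (· * (S *ᵥ q) x') (hPm p x')
    rw [← hq p, ← hPv, sub_mulVec, one_mulVec, smul_mulVec, mulVec_mulVec]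
    rfl
  constructor
  · intro μ hμ0 hμ1
    set S := ∑ i, μ i • Sm (e i) with hS
    have hSv : ∀ (v : X × U → ℝ) x, (S *ᵥ v) x = ∑ i, μ i * v (x, e i x) := by
      intro v x
      simp [hS, sum_mulVec, smul_mulVec, hSmv]
    have hS0 : ∀ x p, 0 ≤ S x p := by
      intro x p
      rw [hS, Matrix.sum_apply]
      exact Finset.sum_nonneg fun i _ => mul_nonneg (hμ0 i) (hSm0 _ _ _)
    have hK := mul_mem_rowStochastic_of_rectangular hPm0 hS0 hPm1
      (by ext x; simp [hSv, hμ1])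
    refine ⟨isUnit_one_sub_smul_of_mem_rowStochastic hK hβ0.le hβ1,
      le_inv_one_sub_smul_mulVec hK hβ0.le hβ1 fun p => ?_⟩
    have hmin : ∀ x, ⨅ u' : U, q (x, u') ≤ (S *ᵥ q) x := by
      intro x
      rw [hSv]
      calc ⨅ u' : U, q (x, u') = ∑ i, μ i * ⨅ u' : U, q (x, u') := by
            rw [← Finset.sum_mul, hμ1, one_mul]
        _ ≤ _ := Finset.sum_le_sum fun i _ =>
            mul_le_mul_of_nonneg_left (ciInf_le (Set.finite_range _).bddBelow _) (hμ0 i)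
    have hle := mul_le_mul_of_nonneg_left (Finset.sum_le_sum fun x' (_ : x' ∈ Finset.univ) =>
      mul_le_mul_of_nonneg_left (hmin x') (hP0 p x')) hβ0.le
    rw [hqm]
    linarith
  · choose φ hφ using fun x => exists_eq_ciInf_of_finite (f := fun u => q (x, u))
    have hK := mul_mem_rowStochastic_of_rectangular hPm0 (hSm0 φ) hPm1
      (by ext x; simp [hSmv])
    have hu := isUnit_one_sub_smul_of_mem_rowStochastic hK hβ0.le hβ1
    have hqς : (1 - β • (Pm * Sm φ)) *ᵥ q = ς := by
      ext p
      simp [hqm, hSmv, hφ]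
    refine ⟨φ, ?_⟩
    rw [← hqς, mulVec_mulVec, nonsing_inv_mul _ ((isUnit_iff_isUnit_det _).1 hu),
      one_mulVec]
end

section
/- Let S be a d×d row-stochastic matrix (nonnegative entries, each row summing to 1) that is irreducible (for every pair of indices i, j there exists n ≥ 1 with (Sⁿ)_{ij} > 0). Let β ∈ (0,1) and let Π be a diagonal d×d matrix with strictly positive diagonal entries ϖ_1,…,ϖ_d. Set A = −Π (I − β S). Then there exist a real eigenvalue λ of A and an eigenvector v ∈ ℝ^d with strictly positive entries such that A v = λ v and −(1−β) · max_k ϖ_k ≤ λ < 0. -/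
open Matrix

theorem Matrix.mulVec_pos_of_pos {n : Type*} [Fintype n] {B : Matrix n n ℝ}
    (hB : ∀ i j, 0 < B i j) {y : n → ℝ} (hy : 0 ≤ y) (hy0 : y ≠ 0) (i : n) :
    0 < (B *ᵥ y) i := by
  obtain ⟨j, hj⟩ := Function.ne_iff.mp hy0
  exact Finset.sum_pos' (fun k _ => mul_nonneg (hB i k).le (hy k))
    ⟨j, Finset.mem_univ j, mul_pos (hB i j) (lt_of_le_of_ne (hy j) (Ne.symm hj))⟩

theorem Matrix.pow_entry_nonneg {n : Type*} [Fintype n] [DecidableEq n] {M : Matrix n n ℝ}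
    (hM : ∀ i j, 0 ≤ M i j) (k : ℕ) (i j : n) : 0 ≤ (M ^ k) i j := by
  induction k generalizing i j with
  | zero => rw [pow_zero, one_apply]; split_ifs <;> norm_num
  | succ k ih =>
    rw [pow_succ, mul_apply]
    exact Finset.sum_nonneg fun l _ => mul_nonneg (ih i l) (hM l j)

theorem Matrix.pow_entry_le_pow_entry {n : Type*} [Fintype n] [DecidableEq n]
    {M N : Matrix n n ℝ} (hM : ∀ i j, 0 ≤ M i j) (hMN : ∀ i j, M i j ≤ N i j)
    (k : ℕ) (i j : n) : (M ^ k) i j ≤ (N ^ k) i j := by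
  induction k generalizing i j with
  | zero => simp
  | succ k ih =>
    rw [pow_succ, pow_succ, mul_apply, mul_apply]
    exact Finset.sum_le_sum fun l _ => mul_le_mul (ih i l) (hMN l j) (hM l j)
      (pow_entry_nonneg (fun i j => (hM i j).trans (hMN i j)) k i l)

/-- An irreducible nonnegative matrix commutes with an entrywise positive one, of which every
eigenvector of the former is an eigenvector. -/
theorem Matrix.exists_pos_commute {n : Type*} [Fintype n] [DecidableEq n] {M : Matrix n n ℝ}
    (hM : ∀ i j, 0 ≤ M i j) (hirr : ∀ i j, ∃ k : ℕ, 0 < (M ^ k) i j) :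
    ∃ B : Matrix n n ℝ, (∀ i j, 0 < B i j) ∧ M * B = B * M ∧
      ∀ (r : ℝ) (x : n → ℝ), M *ᵥ x = r • x → ∃ s : ℝ, B *ᵥ x = s • x := by
  choose k hk using hirr
  refine ⟨∑ p : n × n, M ^ k p.1 p.2, fun i j => ?_, ?_, fun r x hx => ?_⟩
  · rw [sum_apply]
    exact Finset.sum_pos' (fun p _ => pow_entry_nonneg hM _ i j)
      ⟨(i, j), Finset.mem_univ _, hk i j⟩
  · exact Commute.sum_right _ _ _ fun p _ => Commute.self_pow M _
  · have hpow : ∀ m : ℕ, M ^ m *ᵥ x = r ^ m • x := by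
      intro m
      induction m with
      | zero => simp
      | succ m ih => rw [pow_succ, ← mulVec_mulVec, hx, mulVec_smul, ih, smul_smul, pow_succ']
    refine ⟨∑ p : n × n, r ^ k p.1 p.2, ?_⟩
    rw [sum_mulVec, Finset.sum_smul]
    exact Finset.sum_congr rfl fun p _ => hpow _

/-- Collatz–Wielandt: the maximum of `{r | ∃ x ∈ stdSimplex, r • x ≤ M *ᵥ x}` is attained. -/
theorem Matrix.exists_max_subeigenvalue {n : Type*} [Fintype n] {M : Matrix n n ℝ}
    (hM : ∀ i j, 0 ≤ M i j) {w : n → ℝ} (hw : w ∈ stdSimplex ℝ n) {r₀ : ℝ}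
    (hr₀ : r₀ • w ≤ M *ᵥ w) :
    ∃ r : ℝ, ∃ x ∈ stdSimplex ℝ n, r₀ ≤ r ∧ r • x ≤ M *ᵥ x ∧
      ∀ s : ℝ, ∀ z ∈ stdSimplex ℝ n, s • z ≤ M *ᵥ z → s ≤ r := by
  have hbound : ∀ s : ℝ, ∀ z ∈ stdSimplex ℝ n, s • z ≤ M *ᵥ z → s ≤ ∑ i, ∑ j, M i j := by
    intro s z hz hsz
    calc s = ∑ i, (s • z) i := by simp [← Finset.mul_sum, hz.2]
      _ ≤ ∑ i, (M *ᵥ z) i := Finset.sum_le_sum fun i _ => hsz i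
      _ ≤ ∑ i, ∑ j, M i j := Finset.sum_le_sum fun i _ => Finset.sum_le_sum fun j _ =>
          mul_le_of_le_one_right (hM i j)
            (hz.2 ▸ Finset.single_le_sum (fun l _ => hz.1 l) (Finset.mem_univ j))
  have hK : IsCompact ((Set.Icc r₀ (∑ i, ∑ j, M i j) ×ˢ stdSimplex ℝ n) ∩
      {p : ℝ × (n → ℝ) | p.1 • p.2 ≤ M *ᵥ p.2}) :=
    (isCompact_Icc.prod (isCompact_stdSimplex ℝ n)).inter_right
      (isClosed_le (by fun_prop) (by fun_prop))
  obtain ⟨⟨r, x⟩, ⟨⟨hr, hx⟩, hrx⟩, hmax⟩ := hK.exists_isMaxOn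
    ⟨(r₀, w), ⟨⟨⟨le_rfl, hbound _ _ hw hr₀⟩, hw⟩, hr₀⟩⟩ continuous_fst.continuousOn
  refine ⟨r, x, hx, hr.1, hrx, fun s z hz hsz => ?_⟩
  by_contra! hlt
  exact hlt.not_ge (hmax (a := (s, z)) ⟨⟨⟨hr.1.trans hlt.le, hbound s z hz hsz⟩, hz⟩, hsz⟩)

/-- **Perron–Frobenius**: an irreducible nonnegative matrix has a positive eigenvector, whose
eigenvalue dominates every `r₀` admitting `w` in the simplex with `r₀ • w ≤ M *ᵥ w`. -/
theorem Matrix.exists_pos_eigenvector {n : Type*} [Fintype n] [DecidableEq n]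
    {M : Matrix n n ℝ} (hM : ∀ i j, 0 ≤ M i j) (hirr : ∀ i j, ∃ k : ℕ, 0 < (M ^ k) i j)
    {w : n → ℝ} (hw : w ∈ stdSimplex ℝ n) {r₀ : ℝ} (hr₀ : r₀ • w ≤ M *ᵥ w) :
    ∃ (r : ℝ) (v : n → ℝ), (∀ i, 0 < v i) ∧ M *ᵥ v = r • v ∧ r₀ ≤ r := by
  obtain ⟨r, x, hx, hr, hrx, hmax⟩ := exists_max_subeigenvalue hM hw hr₀
  obtain ⟨B, hB, hcomm, hBeig⟩ := exists_pos_commute hM hirr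
  have hx0 : x ≠ 0 := by
    rintro rfl
    simpa using hx.2
  have hne : Nonempty n := (Function.ne_iff.mp hx0).nonempty
  have hBx := mulVec_pos_of_pos hB hx.1 hx0
  have heig : M *ᵥ x = r • x := by
    by_contra hne'
    have hBy := mulVec_pos_of_pos hB (sub_nonneg.mpr hrx) (sub_ne_zero.mpr hne')
    obtain ⟨i₀, hi₀⟩ := Finite.exists_min fun i => (B *ᵥ (M *ᵥ x - r • x)) i / (B *ᵥ x) i
    set ε := (B *ᵥ (M *ᵥ x - r • x)) i₀ / (B *ᵥ x) i₀
    have hε : 0 < ε := div_pos (hBy i₀) (hBx i₀)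
    have hsum : 0 < ∑ i, (B *ᵥ x) i := Finset.sum_pos (fun i _ => hBx i) Finset.univ_nonempty
    have hsub : (r + ε) • (B *ᵥ x) ≤ M *ᵥ (B *ᵥ x) := by
      intro i
      have h := (le_div_iff₀ (hBx i)).mp (hi₀ i)
      rw [mulVec_sub, mulVec_smul, mulVec_mulVec, ← hcomm, ← mulVec_mulVec] at h
      simp only [Pi.sub_apply, Pi.smul_apply, smul_eq_mul] at h ⊢
      linarith
    refine (lt_add_of_pos_right r hε).not_ge
      (hmax (r + ε) ((∑ i, (B *ᵥ x) i)⁻¹ • (B *ᵥ x)) ⟨fun i => ?_, ?_⟩ ?_)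
    · exact mul_nonneg (inv_nonneg.mpr hsum.le) (hBx i).le
    · simp only [Pi.smul_apply, smul_eq_mul, ← Finset.mul_sum]
      exact inv_mul_cancel₀ hsum.ne'
    · rw [smul_comm, mulVec_smul]
      exact smul_le_smul_of_nonneg_left hsub (inv_nonneg.mpr hsum.le)
  obtain ⟨s, hs⟩ := hBeig r x heig
  refine ⟨r, x, fun i => lt_of_le_of_ne (hx.1 i) fun h0 => ?_, heig, hr⟩
  have := hBx i
  rw [hs, Pi.smul_apply, ← h0, smul_zero] at this
  exact this.false

/-- Perron–Frobenius construction: for `A = -Π(I - βS)` with `S` irreducible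
row-stochastic and `Π = diag(ϖ)`, there is a strictly positive eigenvector with
real eigenvalue `λ ∈ [-(1-β)·max_k ϖ_k, 0)`. -/
theorem stmt7 {d : ℕ} [NeZero d]
    (S : Matrix (Fin d) (Fin d) ℝ)
    (hS0 : ∀ i j, 0 ≤ S i j) (hS1 : ∀ i, ∑ j, S i j = 1)
    (hirr : ∀ i j, ∃ n : ℕ, 1 ≤ n ∧ 0 < (S ^ n) i j)
    (β : ℝ) (hβ : β ∈ Set.Ioo (0 : ℝ) 1)
    (ϖ : Fin d → ℝ) (hϖ : ∀ k, 0 < ϖ k) :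
    ∃ (lam : ℝ) (v : Fin d → ℝ),
      (∀ i, 0 < v i) ∧
      (-(Matrix.diagonal ϖ * (1 - β • S))).mulVec v = lam • v ∧
      -((1 - β) * ⨆ k, ϖ k) ≤ lam ∧ lam < 0 := by
  obtain ⟨hβ0, hβ1⟩ := hβ
  set c := ⨆ k, ϖ k
  have hc : ∀ k, ϖ k ≤ c := le_ciSup (Set.finite_range ϖ).bddAbove
  set A := -(diagonal ϖ * (1 - β • S)) with hA
  have hAv : ∀ (v : Fin d → ℝ) i, (A *ᵥ v) i = ϖ i * (β * (S *ᵥ v) i - v i) := by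
    intro v i
    rw [hA, neg_mulVec, ← mulVec_mulVec, sub_mulVec, one_mulVec, smul_mulVec, Pi.neg_apply,
      mulVec_diagonal]
    simp only [Pi.sub_apply, Pi.smul_apply, smul_eq_mul]
    ring
  obtain ⟨k₀, hk₀⟩ := Finite.exists_min ϖ
  have hε : 0 < β * ϖ k₀ := mul_pos hβ0 (hϖ k₀)
  have hle : ∀ i j, ((β * ϖ k₀) • S) i j ≤ (A + c • (1 : Matrix (Fin d) (Fin d) ℝ)) i j := by
    intro i j
    have h : β * ϖ k₀ * S i j ≤ β * ϖ i * S i j :=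
      mul_le_mul_of_nonneg_right (mul_le_mul_of_nonneg_left (hk₀ i) hβ0.le) (hS0 i j)
    simp only [hA, Matrix.add_apply, Matrix.neg_apply, diagonal_mul, Matrix.sub_apply,
      Matrix.smul_apply, smul_eq_mul, one_apply]
    split_ifs <;> linarith [hc i]
  have hεS : ∀ i j, 0 ≤ ((β * ϖ k₀) • S) i j := fun i j => mul_nonneg hε.le (hS0 i j)
  have hd : (d : ℝ) ≠ 0 := NeZero.ne _
  have hshift : ∀ v : Fin d → ℝ, (A + c • (1 : Matrix (Fin d) (Fin d) ℝ)) *ᵥ v =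
      A *ᵥ v + c • v := by
    intro v
    rw [add_mulVec, smul_mulVec, one_mulVec]
  obtain ⟨r, v, hv, heig, hr⟩ := exists_pos_eigenvector
    (M := A + c • (1 : Matrix (Fin d) (Fin d) ℝ)) (fun i j => (hεS i j).trans (hle i j))
    (fun i j => by
      obtain ⟨n, -, hn⟩ := hirr i j
      refine ⟨n, lt_of_lt_of_le ?_ (pow_entry_le_pow_entry hεS hle n i j)⟩
      rw [smul_pow]
      exact mul_pos (pow_pos hε n) hn)
    (w := fun _ => (d : ℝ)⁻¹) ⟨fun _ => by positivity, by simp [hd]⟩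
    (r₀ := c - (1 - β) * c) (by
      intro i
      have hS : (S *ᵥ fun _ => (d : ℝ)⁻¹) i = (d : ℝ)⁻¹ := by
        simp only [mulVec, dotProduct, ← Finset.sum_mul, hS1, one_mul]
      rw [hshift, Pi.add_apply, hAv, hS]
      simp only [Pi.smul_apply, smul_eq_mul]
      have : 0 ≤ (c - ϖ i) * ((1 - β) * (d : ℝ)⁻¹) :=
        mul_nonneg (sub_nonneg.mpr (hc i)) (mul_nonneg (by linarith) (by positivity))
      linarith)
  have hAeig : A *ᵥ v = (r - c) • v := by
    rw [sub_smul, ← heig, hshift, add_sub_cancel_right]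
  refine ⟨r - c, v, hv, hAeig, by linarith, ?_⟩
  obtain ⟨m, hm⟩ := Finite.exists_max v
  have hSm : (S *ᵥ v) m ≤ v m := by
    calc (S *ᵥ v) m = ∑ j, S m j * v j := rfl
      _ ≤ ∑ j, S m j * v m :=
          Finset.sum_le_sum fun j _ => mul_le_mul_of_nonneg_left (hm j) (hS0 m j)
      _ = v m := by rw [← Finset.sum_mul, hS1, one_mul]
  have hneg : (A *ᵥ v) m < 0 := by
    rw [hAv]
    refine mul_neg_of_pos_of_neg (hϖ m) (sub_neg.mpr ?_)
    calc β * (S *ᵥ v) m ≤ β * v m := mul_le_mul_of_nonneg_left hSm hβ0.le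
      _ < v m := mul_lt_of_lt_one_left (hv m) hβ1
  rw [hAeig, Pi.smul_apply, smul_eq_mul] at hneg
  exact neg_of_mul_neg_left hneg (hv m).le
end

section
/- Let X and U be finite nonempty sets, P a matrix with rows indexed by X×U and columns by X having nonnegative entries and each row summing to 1, β ∈ (0,1). Fix an enumeration φ^{(1)},…,φ^{(ℓ)} of all deterministic policies φ : X → U, and for q : X×U → ℝ with argmin_u q(x,u) nonempty for each x, define φ^q := φ^{(κ)}, where κ is the smallest index i such that φ^{(i)}(x) ∈ argmin_u q(x,u) for every x ∈ X. Then for each k ∈ {1,…,ℓ}, the set Θ^k := { q : X×U → [0,∞) : φ^q = φ^{(k)} } is convex, and is a positive cone: if q ∈ Θ^k and t > 0 then t·q ∈ Θ^k. -/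
open Matrix

/-- The minimal-index greedy selection `ι` is unchanged under conic combinations of two
functions with the same selection, provided the first weight is positive. -/
theorem greedyIndex_smul_add_smul {X U : Type*} {ℓ : ℕ} {e : Fin ℓ → X → U}
    {ι : (X × U → ℝ) → Fin ℓ}
    (hιopt : ∀ (q : X × U → ℝ) (x : X) (u : U), q (x, e (ι q) x) ≤ q (x, u))
    (hιmin : ∀ (q : X × U → ℝ) (i : Fin ℓ),
      (∀ (x : X) (u : U), q (x, e i x) ≤ q (x, u)) → ι q ≤ i)
    {q r : X × U → ℝ} (hqr : ι q = ι r) {a b : ℝ} (ha : 0 < a) (hb : 0 ≤ b) :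
    ι (a • q + b • r) = ι q := by
  apply le_antisymm
  · refine hιmin _ _ fun x u => ?_
    have hq := mul_le_mul_of_nonneg_left (hιopt q x u) ha.le
    have hr := mul_le_mul_of_nonneg_left (hιopt r x u) hb
    rw [← hqr] at hr
    simpa using add_le_add hq hr
  · refine hιmin _ _ fun x u => le_trans ?_ (hιopt q x u)
    have hsum := hιopt (a • q + b • r) x (e (ι q) x)
    have hr := mul_le_mul_of_nonneg_left (hιopt r x (e (ι (a • q + b • r)) x)) hb
    rw [← hqr] at hr
    simp only [Pi.add_apply, Pi.smul_apply, smul_eq_mul] at hsum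
    exact le_of_mul_le_mul_left (by linarith) ha

/-- For each policy index `k`, the set `Θ^k` of nonnegative Q-functions whose
(tie-broken) greedy policy is `φ^{(k)}` is a convex positive cone. -/
theorem stmt10 {X U : Type*} [Fintype X] [Fintype U] [Nonempty X] [Nonempty U]
    (P : X × U → X → ℝ) (hP0 : ∀ p x', 0 ≤ P p x') (hP1 : ∀ p, ∑ x', P p x' = 1)
    (β : ℝ) (hβ : β ∈ Set.Ioo (0 : ℝ) 1)
    (ℓ : ℕ) (e : Fin ℓ ≃ (X → U))
    (ι : (X × U → ℝ) → Fin ℓ)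
    (hιopt : ∀ (q : X × U → ℝ) (x : X) (u : U), q (x, e (ι q) x) ≤ q (x, u))
    (hιmin : ∀ (q : X × U → ℝ) (i : Fin ℓ),
      (∀ (x : X) (u : U), q (x, e i x) ≤ q (x, u)) → ι q ≤ i)
    (k : Fin ℓ) :
    Convex ℝ {q : X × U → ℝ | (∀ p, 0 ≤ q p) ∧ ι q = k} ∧
    ∀ q ∈ {q : X × U → ℝ | (∀ p, 0 ≤ q p) ∧ ι q = k}, ∀ t : ℝ, 0 < t →
      t • q ∈ {q : X × U → ℝ | (∀ p, 0 ≤ q p) ∧ ι q = k} := by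
  constructor
  · rintro q ⟨hq0, hqk⟩ r ⟨hr0, hrk⟩ a b ha hb hab
    rcases ha.eq_or_lt with rfl | ha
    · obtain rfl : b = 1 := by linarith
      simpa using And.intro hr0 hrk
    · exact ⟨fun p => add_nonneg (mul_nonneg ha.le (hq0 p)) (mul_nonneg hb (hr0 p)),
        (greedyIndex_smul_add_smul hιopt hιmin (hqk.trans hrk.symm) ha hb).trans hqk⟩
  · rintro q ⟨hq0, hqk⟩ t ht
    refine ⟨fun p => mul_nonneg ht.le (hq0 p), ?_⟩
    have h := greedyIndex_smul_add_smul hιopt hιmin (rfl : ι q = ι q) ht le_rfl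
    rw [zero_smul, add_zero] at h
    exact h.trans hqk
end

section
/- Let X and U be finite nonempty sets, P a matrix with rows indexed by X×U and columns by X having nonnegative entries and each row summing to 1, β ∈ (0,1). Fix an enumeration φ^{(1)},…,φ^{(ℓ)} of all deterministic policies φ : X → U, and for a probability mass function μ on {1,…,ℓ} let ∂Q_μ denote the inverse of the matrix Σ_i μ(i)(I − β P S_{φ^{(i)}}). Let c, q : ℝ → ℝ^{X×U} be curves with q_t = Q(c_t) for all t ∈ ℝ, let t₀ ∈ ℝ be a point at which both q and c are differentiable, and let μ be a probability mass function on {1,…,ℓ} satisfying ∂Q_μ c_{t₀} = q_{t₀}. Then the derivatives satisfy q'(t₀) = ∂Q_μ c'(t₀). -/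
open Matrix

/-- If `A v` differs from `v` by at most `β ‖v‖` in each coordinate, with `β < 1`, then `A` is
invertible. -/
lemma isUnit_of_abs_sub_mulVec_le {ι : Type*} [Fintype ι] [DecidableEq ι] {A : Matrix ι ι ℝ}
    {β : ℝ} (hβ0 : 0 ≤ β) (hβ1 : β < 1) (h : ∀ v i, |v i - (A *ᵥ v) i| ≤ β * ‖v‖) :
    IsUnit A := by
  rw [← Matrix.mulVec_injective_iff_isUnit]
  refine (injective_iff_map_eq_zero A.mulVecLin).2 fun v hv => ?_
  have hv0 : A *ᵥ v = 0 := hv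
  have hle : ‖v‖ ≤ β * ‖v‖ := by
    refine (pi_norm_le_iff_of_nonneg (by positivity)).2 fun i => ?_
    simpa [hv0] using h v i
  have : ‖v‖ = 0 := by nlinarith [norm_nonneg v]
  exact norm_eq_zero.1 this

lemma abs_sum_mul_le_of_forall_abs_le {ι : Type*} [Fintype ι] {w f : ι → ℝ} {C : ℝ}
    (hw0 : ∀ i, 0 ≤ w i) (hw1 : ∑ i, w i = 1) (hf : ∀ i, |f i| ≤ C) :
    |∑ i, w i * f i| ≤ C := by
  calc |∑ i, w i * f i| ≤ ∑ i, |w i * f i| := Finset.abs_sum_le_sum_abs _ _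
    _ ≤ ∑ i, w i * C := Finset.sum_le_sum fun i _ => by
        rw [abs_mul, abs_of_nonneg (hw0 i)]
        exact mul_le_mul_of_nonneg_left (hf i) (hw0 i)
    _ = C := by rw [← Finset.sum_mul, hw1, one_mul]

lemma le_sum_mul_of_forall_le {ι : Type*} [Fintype ι] {w f : ι → ℝ} {m : ℝ}
    (hw0 : ∀ i, 0 ≤ w i) (hw1 : ∑ i, w i = 1) (hf : ∀ i, m ≤ f i) :
    m ≤ ∑ i, w i * f i := by
  calc m = ∑ i, w i * m := by rw [← Finset.sum_mul, hw1, one_mul]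
    _ ≤ ∑ i, w i * f i := Finset.sum_le_sum fun i _ => mul_le_mul_of_nonneg_left (hf i) (hw0 i)

lemma sum_smul_one_sub_mulVec_apply {X U ι : Type*} [Fintype X] [Fintype U] [Fintype ι]
    [DecidableEq X] [DecidableEq U] (P : Matrix (X × U) X ℝ) (β : ℝ) (φ : ι → X → U)
    (S : ι → Matrix X (X × U) ℝ)
    (hS : ∀ i x p, S i x p = if p.1 = x ∧ p.2 = φ i x then 1 else 0)
    (μ : ι → ℝ) (hμ1 : ∑ i, μ i = 1) (v : X × U → ℝ) (p : X × U) :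
    ((∑ i, μ i • ((1 : Matrix (X × U) (X × U) ℝ) - β • (P * S i))) *ᵥ v) p =
      v p - β * ∑ x, P p x * ∑ i, μ i * v (x, φ i x) := by
  have hSv : ∀ i x, (S i *ᵥ v) x = v (x, φ i x) := fun i x => by
    rw [Matrix.mulVec, dotProduct, Finset.sum_eq_single (x, φ i x)]
    · simp [hS]
    · rintro ⟨y, u⟩ - hne
      rw [hS, if_neg (by simpa [Prod.ext_iff] using hne), zero_mul]
    · simp
  have hterm : ∀ i, ((μ i • ((1 : Matrix (X × U) (X × U) ℝ) - β • (P * S i))) *ᵥ v) p =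
      μ i * v p - β * ∑ x, P p x * (μ i * v (x, φ i x)) := fun i => by
    rw [Matrix.smul_mulVec, Matrix.sub_mulVec, Matrix.smul_mulVec, Matrix.one_mulVec,
      ← Matrix.mulVec_mulVec]
    simp only [Pi.smul_apply, Pi.sub_apply, smul_eq_mul, Matrix.mulVec, dotProduct] at hSv ⊢
    simp only [hSv, mul_sub, Finset.mul_sum]
    congr 1
    exact Finset.sum_congr rfl fun x _ => by ring
  rw [Matrix.sum_mulVec, Finset.sum_apply, Finset.sum_congr rfl fun i _ => hterm i,
    Finset.sum_sub_distrib, ← Finset.sum_mul, hμ1, one_mul, ← Finset.mul_sum, Finset.sum_comm]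
  simp only [Finset.mul_sum]

/-- Chain rule along the Zap-Q ODE: if `q_t = Q(c_t)`, both are differentiable at
`t₀`, and `μ` is a pmf over policies with `∂Q_μ c_{t₀} = q_{t₀}`, then
`q'(t₀) = ∂Q_μ c'(t₀)`. -/
theorem stmt12 {X U : Type*} [Fintype X] [Fintype U] [Nonempty X] [Nonempty U]
    [DecidableEq X] [DecidableEq U]
    (P : X × U → X → ℝ) (hP0 : ∀ p x', 0 ≤ P p x') (hP1 : ∀ p, ∑ x', P p x' = 1)
    (β : ℝ) (hβ : β ∈ Set.Ioo (0 : ℝ) 1)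
    (ℓ : ℕ) (e : Fin ℓ ≃ (X → U))
    (Sm : (X → U) → Matrix X (X × U) ℝ)
    (hSm : ∀ (φ : X → U) (x : X) (p : X × U),
      Sm φ x p = if p.1 = x ∧ p.2 = φ x then 1 else 0)
    (Pm : Matrix (X × U) X ℝ) (hPm : ∀ p x', Pm p x' = P p x')
    (μ : Fin ℓ → ℝ) (hμ0 : ∀ i, 0 ≤ μ i) (hμ1 : ∑ i, μ i = 1)
    (c q : ℝ → X × U → ℝ)
    (hq : ∀ t p, q t p = c t p + β * ∑ x', P p x' * ⨅ u' : U, q t (x', u'))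
    (t₀ : ℝ) (c' q' : X × U → ℝ)
    (hc' : HasDerivAt c c' t₀) (hq' : HasDerivAt q q' t₀)
    (hμeq : ((∑ i, μ i • ((1 : Matrix (X × U) (X × U) ℝ) - β • (Pm * Sm (e i))))⁻¹).mulVec
        (c t₀) = q t₀) :
    q' = ((∑ i, μ i • ((1 : Matrix (X × U) (X × U) ℝ) - β • (Pm * Sm (e i))))⁻¹).mulVec c' := by
  set A := ∑ i, μ i • ((1 : Matrix (X × U) (X × U) ℝ) - β • (Pm * Sm (e i)))
  have hAv : ∀ v p, (A *ᵥ v) p = v p - β * ∑ x, P p x * ∑ i, μ i * v (x, e i x) := fun v p => by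
    simpa only [hPm] using
      sum_smul_one_sub_mulVec_apply Pm β e (fun i => Sm (e i)) (fun i => hSm (e i)) μ hμ1 v p
  have hunit : IsUnit A := isUnit_of_abs_sub_mulVec_le hβ.1.le hβ.2 fun v p => by
    rw [hAv, sub_sub_cancel, abs_mul, abs_of_pos hβ.1]
    exact mul_le_mul_of_nonneg_left (abs_sum_mul_le_of_forall_abs_le (hP0 p) (hP1 p) fun x =>
      abs_sum_mul_le_of_forall_abs_le hμ0 hμ1 fun i => norm_le_pi_norm v _) hβ.1.le
  have hdet : IsUnit A.det := (Matrix.isUnit_iff_isUnit_det A).1 hunit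
  have heq : A *ᵥ q t₀ = c t₀ := by
    rw [← hμeq, Matrix.mulVec_mulVec, Matrix.mul_nonsing_inv A hdet, Matrix.one_mulVec]
  have hle : ∀ t p, (A *ᵥ q t) p ≤ c t p := fun t p => by
    have hmin : ∑ x, P p x * ⨅ u, q t (x, u) ≤ ∑ x, P p x * ∑ i, μ i * q t (x, e i x) :=
      Finset.sum_le_sum fun x _ => mul_le_mul_of_nonneg_left
        (le_sum_mul_of_forall_le hμ0 hμ1 fun i => ciInf_le (Set.finite_range _).bddBelow (e i x))
        (hP0 p x)
    rw [hAv, hq t p]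
    linarith [mul_le_mul_of_nonneg_left hmin hβ.1.le]
  have hderiv : A *ᵥ q' = c' := by
    funext p
    have hAq : HasDerivAt (fun t => A *ᵥ q t) (A *ᵥ q') t₀ :=
      (LinearMap.toContinuousLinearMap A.mulVecLin).hasFDerivAt.comp_hasDerivAt t₀ hq'
    -- The gap `c t p - (A q t) p` is nonnegative and vanishes at `t₀`.
    have hgap := (hasDerivAt_pi.1 hc' p).sub (hasDerivAt_pi.1 hAq p)
    have hzero : c' p - (A *ᵥ q') p = 0 := by
      refine IsLocalMin.hasDerivAt_eq_zero (Filter.Eventually.of_forall fun t => ?_) hgap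
      simpa [heq] using hle t p
    linarith
  rw [← hderiv, Matrix.mulVec_mulVec, Matrix.nonsing_inv_mul A hdet, Matrix.one_mulVec]
end

section
/- Let X and U be finite nonempty sets, P a matrix with rows indexed by X×U and columns by X having nonnegative entries and each row summing to 1, β ∈ (0,1), and c̄ : X×U → ℝ. Let c : [0,∞) → ℝ^{X×U} be differentiable and satisfy the ODE c'_t = −c_t + c̄ for all t ≥ 0, and set q_t := Q(c_t). Then for every t ≥ 0, max_{(x,u)} |q_t(x,u) − Q(c̄)(x,u)| ≤ (1/(1−β)) e^{−t} max_{(x,u)} |c_0(x,u) − c̄(x,u)|. In particular the ODE is exponentially asymptotically stable and q_t converges to Q* := Q(c̄) as t → ∞. -/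
open Filter Topology

theorem abs_ciInf_sub_ciInf_le {ι : Type*} [Finite ι] [Nonempty ι] {f g : ι → ℝ} {M : ℝ}
    (h : ∀ i, |f i - g i| ≤ M) : |(⨅ i, f i) - ⨅ i, g i| ≤ M := by
  have aux : ∀ {f g : ι → ℝ}, (∀ i, |f i - g i| ≤ M) → (⨅ i, f i) - M ≤ ⨅ i, g i := by
    intro f g h
    refine le_ciInf fun i => ?_
    have h₁ := ciInf_le (Set.finite_range f).bddBelow i
    have h₂ := (abs_le.mp (h i)).2
    linarith
  have h₁ := aux h
  have h₂ := aux fun i => by rw [abs_sub_comm]; exact h i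
  exact abs_le.mpr ⟨by linarith, by linarith⟩

/-- Averages of two functions within `M` of each other are within `M` of each other. -/
theorem abs_sum_mul_sub_sum_mul_le {ι : Type*} [Fintype ι] {w f g : ι → ℝ} {M : ℝ}
    (hw0 : ∀ i, 0 ≤ w i) (hw1 : ∑ i, w i = 1) (h : ∀ i, |f i - g i| ≤ M) :
    |∑ i, w i * f i - ∑ i, w i * g i| ≤ M := by
  calc |∑ i, w i * f i - ∑ i, w i * g i| = |∑ i, w i * (f i - g i)| := by
        rw [← Finset.sum_sub_distrib]; simp only [mul_sub]
    _ ≤ ∑ i, |w i * (f i - g i)| := Finset.abs_sum_le_sum_abs _ _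
    _ ≤ ∑ i, w i * M := Finset.sum_le_sum fun i _ => by
        rw [abs_mul, abs_of_nonneg (hw0 i)]
        exact mul_le_mul_of_nonneg_left (h i) (hw0 i)
    _ = M := by rw [← Finset.sum_mul, hw1, one_mul]

/-- The solution of the discounted Bellman equation is `1 / (1 - β)`-Lipschitz in the cost,
for the sup norm. -/
theorem abs_bellman_sub_le {X U : Type*} [Fintype X] [Fintype U] [Nonempty X] [Nonempty U]
    {P : X × U → X → ℝ} (hP0 : ∀ p x', 0 ≤ P p x') (hP1 : ∀ p, ∑ x', P p x' = 1)
    {β : ℝ} (hβ : β ∈ Set.Ioo (0 : ℝ) 1) {s₁ s₂ q₁ q₂ : X × U → ℝ}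
    (hq₁ : ∀ p, q₁ p = s₁ p + β * ∑ x', P p x' * ⨅ u' : U, q₁ (x', u'))
    (hq₂ : ∀ p, q₂ p = s₂ p + β * ∑ x', P p x' * ⨅ u' : U, q₂ (x', u'))
    {M : ℝ} (hM : ∀ p, |s₁ p - s₂ p| ≤ M) (p : X × U) :
    |q₁ p - q₂ p| ≤ 1 / (1 - β) * M := by
  obtain ⟨p₀, hp₀⟩ := Finite.exists_max fun p => |q₁ p - q₂ p|
  refine (hp₀ p).trans ?_
  have hsum := abs_sum_mul_sub_sum_mul_le (hP0 p₀) (hP1 p₀) fun x' =>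
    abs_ciInf_sub_ciInf_le fun u' : U => hp₀ (x', u')
  have key : |q₁ p₀ - q₂ p₀| ≤ M + β * |q₁ p₀ - q₂ p₀| := by
    calc |q₁ p₀ - q₂ p₀| = |(s₁ p₀ - s₂ p₀) + β * (∑ x', P p₀ x' * (⨅ u' : U, q₁ (x', u'))
            - ∑ x', P p₀ x' * ⨅ u' : U, q₂ (x', u'))| := by
          rw [hq₁ p₀, hq₂ p₀]; congr 1; ring
      _ ≤ M + β * |q₁ p₀ - q₂ p₀| := by
          refine (abs_add_le _ _).trans (add_le_add (hM p₀) ?_)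
          rw [abs_mul, abs_of_pos hβ.1]
          exact mul_le_mul_of_nonneg_left hsum hβ.1.le
  have hβ' : 0 < 1 - β := sub_pos.mpr hβ.2
  rw [one_div_mul_eq_div, le_div_iff₀ hβ']
  linarith

theorem sub_eq_exp_neg_mul_of_hasDerivAt {f : ℝ → ℝ} {a : ℝ}
    (hf : ∀ t, 0 ≤ t → HasDerivAt f (-(f t) + a) t) {t : ℝ} (ht : 0 ≤ t) :
    f t - a = Real.exp (-t) * (f 0 - a) := by
  have hd : ∀ s, 0 ≤ s → HasDerivAt (fun s => Real.exp s * (f s - a)) 0 s := by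
    intro s hs
    refine ((Real.hasDerivAt_exp s).mul ((hf s hs).sub_const a)).congr_deriv ?_
    ring
  have hconst := constant_of_has_deriv_right_zero
    (fun s hs => (hd s hs.1).continuousAt.continuousWithinAt)
    (fun s hs => (hd s hs.1).hasDerivWithinAt) t ⟨ht, le_rfl⟩
  simp only [Real.exp_zero, one_mul] at hconst
  rw [← hconst, ← mul_assoc, ← Real.exp_add, neg_add_cancel, Real.exp_zero, one_mul]

/-- Exponential asymptotic stability of the Zap-Q ODE `ċ_t = -c_t + c̄`:
`‖q_t - Q*‖_∞ ≤ (1-β)⁻¹ e^{-t} ‖c_0 - c̄‖_∞`, where `q_t = Q(c_t)`, and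
consequently `q_t → Q* = Q(c̄)`. -/
theorem stmt13 {X U : Type*} [Fintype X] [Fintype U] [Nonempty X] [Nonempty U]
    (P : X × U → X → ℝ) (hP0 : ∀ p x', 0 ≤ P p x') (hP1 : ∀ p, ∑ x', P p x' = 1)
    (β : ℝ) (hβ : β ∈ Set.Ioo (0 : ℝ) 1)
    (cbar : X × U → ℝ)
    (c : ℝ → X × U → ℝ)
    (hode : ∀ t : ℝ, 0 ≤ t → HasDerivAt c (-(c t) + cbar) t)
    (q : ℝ → X × U → ℝ)
    (hq : ∀ t : ℝ, 0 ≤ t →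
      ∀ p, q t p = c t p + β * ∑ x', P p x' * ⨅ u' : U, q t (x', u'))
    (Qstar : X × U → ℝ)
    (hQstar : ∀ p, Qstar p = cbar p + β * ∑ x', P p x' * ⨅ u' : U, Qstar (x', u')) :
    (∀ t : ℝ, 0 ≤ t → ∀ p, |q t p - Qstar p| ≤
      (1 / (1 - β)) * Real.exp (-t) * ⨆ p' : X × U, |c 0 p' - cbar p'|) ∧
    Tendsto q atTop (𝓝 Qstar) := by
  have hbound : ∀ t : ℝ, 0 ≤ t → ∀ p, |q t p - Qstar p| ≤
      (1 / (1 - β)) * Real.exp (-t) * ⨆ p' : X × U, |c 0 p' - cbar p'| := by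
    intro t ht p
    rw [mul_assoc]
    refine abs_bellman_sub_le hP0 hP1 hβ (hq t ht) hQstar (fun p => ?_) p
    rw [sub_eq_exp_neg_mul_of_hasDerivAt (f := fun t => c t p)
      (fun s hs => hasDerivAt_pi.mp (hode s hs) p) ht, abs_mul, Real.abs_exp]
    exact mul_le_mul_of_nonneg_left
      (le_ciSup (f := fun p' => |c 0 p' - cbar p'|) (Set.finite_range _).bddAbove p)
      (Real.exp_pos _).le
  refine ⟨hbound, tendsto_pi_nhds.mpr fun p => ?_⟩
  rw [tendsto_iff_dist_tendsto_zero]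
  refine squeeze_zero' (Eventually.of_forall fun t => dist_nonneg)
    ((eventually_ge_atTop 0).mono fun t ht => hbound t ht p) ?_
  simpa using (Real.tendsto_exp_neg_atTop_nhds_zero.const_mul (1 / (1 - β))).mul_const
    (⨆ p' : X × U, |c 0 p' - cbar p'|)
end

section
/- Fix T > 0, l > 0 and b > 0. Every Lipschitz function g : ℝ → ℝ is differentiable Lebesgue-almost everywhere; write g' for its a.e. derivative, and for f, g : ℝ → ℝ with g Lipschitz and f bounded measurable define C_T(f,g) := ∫_0^T f(t) g'(t) dt. Then: (i) if g is l-Lipschitz and f₁, f₂ are measurable and bounded on [0,T], then |C_T(f₁,g) − C_T(f₂,g)| ≤ T·l·sup_{t∈[0,T]} |f₁(t) − f₂(t)|; (ii) if f is l-Lipschitz with |f(t)| ≤ b for t ∈ [0,T], and g₁, g₂ are l-Lipschitz, then |C_T(f,g₁) − C_T(f,g₂)| ≤ (2b + T·l)·sup_{t∈[0,T]} |g₁(t) − g₂(t)|. -/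
open MeasureTheory intervalIntegral

theorem lipschitzWith_of_abs_sub_le {g : ℝ → ℝ} {K : ℝ}
    (hg : ∀ s t, |g s - g t| ≤ K * |s - t|) : LipschitzWith K.toNNReal g := by
  refine LipschitzWith.of_dist_le_mul fun s t => ?_
  rw [Real.dist_eq, Real.dist_eq]
  exact (hg s t).trans (mul_le_mul_of_nonneg_right (Real.le_coe_toNNReal K) (abs_nonneg _))

theorem abs_integral_mul_deriv_sub_le {T l : ℝ} (hT : 0 < T) (hl : 0 < l) {g f₁ f₂ : ℝ → ℝ}
    (hg : ∀ s t, |g s - g t| ≤ l * |s - t|) (hf₁ : Measurable f₁) (hf₂ : Measurable f₂)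
    (hb₁ : ∃ M : ℝ, ∀ t ∈ Set.Icc (0 : ℝ) T, |f₁ t| ≤ M)
    (hb₂ : ∃ M : ℝ, ∀ t ∈ Set.Icc (0 : ℝ) T, |f₂ t| ≤ M) :
    |(∫ t in (0 : ℝ)..T, f₁ t * deriv g t) - ∫ t in (0 : ℝ)..T, f₂ t * deriv g t| ≤
      T * l * ⨆ t : Set.Icc (0 : ℝ) T, |f₁ t.1 - f₂ t.1| := by
  have hderiv (t : ℝ) : |deriv g t| ≤ l := by
    simpa [hl.le] using norm_deriv_le_of_lipschitz (lipschitzWith_of_abs_sub_le hg) (x₀ := t)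
  have hint {f : ℝ → ℝ} (hf : Measurable f)
      (hb : ∃ M : ℝ, ∀ t ∈ Set.Icc (0 : ℝ) T, |f t| ≤ M) :
      IntervalIntegrable (fun t => f t * deriv g t) volume 0 T := by
    obtain ⟨M, hM⟩ := hb
    rw [intervalIntegrable_iff_integrableOn_Ioc_of_le hT.le]
    refine IntegrableOn.of_bound measure_Ioc_lt_top
      (hf.mul (measurable_deriv g)).aestronglyMeasurable (M * l) ?_
    refine (ae_restrict_mem measurableSet_Ioc).mono fun t ht => ?_
    have hMt := hM t (Set.Ioc_subset_Icc_self ht)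
    rw [norm_mul]
    exact mul_le_mul hMt (hderiv t) (abs_nonneg _) ((abs_nonneg _).trans hMt)
  rw [← integral_sub (hint hf₁ hb₁) (hint hf₂ hb₂)]
  obtain ⟨M₁, hM₁⟩ := hb₁
  obtain ⟨M₂, hM₂⟩ := hb₂
  have hbdd : BddAbove (Set.range fun t : Set.Icc (0 : ℝ) T => |f₁ t.1 - f₂ t.1|) := by
    refine ⟨M₁ + M₂, ?_⟩
    rintro _ ⟨t, rfl⟩
    exact (abs_sub _ _).trans (add_le_add (hM₁ t t.2) (hM₂ t t.2))
  set S := ⨆ t : Set.Icc (0 : ℝ) T, |f₁ t.1 - f₂ t.1|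
  have hbound : ∀ t ∈ Set.uIoc 0 T, ‖f₁ t * deriv g t - f₂ t * deriv g t‖ ≤ S * l := by
    intro t ht
    rw [Set.uIoc_of_le hT.le] at ht
    have hS : |f₁ t - f₂ t| ≤ S := le_ciSup hbdd ⟨t, Set.Ioc_subset_Icc_self ht⟩
    rw [← sub_mul, norm_mul]
    exact mul_le_mul hS (hderiv t) (abs_nonneg _) ((abs_nonneg _).trans hS)
  calc _ ≤ S * l * |T - 0| := norm_integral_le_of_norm_le_const hbound
    _ = T * l * S := by rw [sub_zero, abs_of_pos hT]; ring

theorem abs_integral_mul_deriv_sub_le_of_lipschitz {T l b : ℝ} (hT : 0 < T) (hl : 0 < l)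
    {f g₁ g₂ : ℝ → ℝ} (hf : ∀ s t, |f s - f t| ≤ l * |s - t|)
    (hfb : ∀ t ∈ Set.Icc (0 : ℝ) T, |f t| ≤ b)
    (hg₁ : ∀ s t, |g₁ s - g₁ t| ≤ l * |s - t|) (hg₂ : ∀ s t, |g₂ s - g₂ t| ≤ l * |s - t|) :
    |(∫ t in (0 : ℝ)..T, f t * deriv g₁ t) - ∫ t in (0 : ℝ)..T, f t * deriv g₂ t| ≤
      (2 * b + T * l) * ⨆ t : Set.Icc (0 : ℝ) T, |g₁ t.1 - g₂ t.1| := by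
  have hac {g : ℝ → ℝ} (hg : ∀ s t, |g s - g t| ≤ l * |s - t|) :
      AbsolutelyContinuousOnInterval g 0 T :=
    (lipschitzWith_of_abs_sub_le hg).lipschitzOnWith.absolutelyContinuousOnInterval
  have hc₁ := (lipschitzWith_of_abs_sub_le hg₁).continuous
  have hc₂ := (lipschitzWith_of_abs_sub_le hg₂).continuous
  have hbd {g : ℝ → ℝ} (hg : Continuous g) : ∃ M : ℝ, ∀ t ∈ Set.Icc (0 : ℝ) T, |g t| ≤ M :=
    isCompact_Icc.exists_bound_of_continuousOn hg.continuousOn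
  have hparts := abs_integral_mul_deriv_sub_le hT hl hf hc₁.measurable hc₂.measurable
    (hbd hc₁) (hbd hc₂)
  obtain ⟨M, hM⟩ := hbd (hc₁.sub hc₂)
  have hbdd : BddAbove (Set.range fun t : Set.Icc (0 : ℝ) T => |g₁ t.1 - g₂ t.1|) := by
    refine ⟨M, ?_⟩
    rintro _ ⟨t, rfl⟩
    exact hM t t.2
  set S := ⨆ t : Set.Icc (0 : ℝ) T, |g₁ t.1 - g₂ t.1|
  have hend {t : ℝ} (ht : t ∈ Set.Icc (0 : ℝ) T) : |f t * (g₁ t - g₂ t)| ≤ b * S := by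
    rw [abs_mul]
    exact mul_le_mul (hfb t ht) (le_ciSup hbdd ⟨t, ht⟩) (abs_nonneg _)
      ((abs_nonneg _).trans (hfb t ht))
  have h0 := abs_le.1 (hend (Set.left_mem_Icc.2 hT.le))
  have h1 := abs_le.1 (hend (Set.right_mem_Icc.2 hT.le))
  rw [(hac hf).integral_mul_deriv_eq_deriv_mul (hac hg₁),
    (hac hf).integral_mul_deriv_eq_deriv_mul (hac hg₂)]
  simp only [mul_comm (deriv f _)]
  have h2 := abs_le.1 hparts
  rw [abs_le]
  constructor <;> linarith

/-- Rademacher's theorem on ℝ, and Lipschitz continuity (in each argument) of the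
bilinear functional `C_T(f,g) = ∫_0^T f(t) g'(t) dt` on bounded/Lipschitz classes. -/
theorem stmt16 (T l b : ℝ) (hT : 0 < T) (hl : 0 < l) (hb : 0 < b) :
    (∀ g : ℝ → ℝ, (∃ K : ℝ, ∀ s t, |g s - g t| ≤ K * |s - t|) →
      ∀ᵐ t ∂(volume : Measure ℝ), DifferentiableAt ℝ g t) ∧
    (∀ g f₁ f₂ : ℝ → ℝ,
      (∀ s t, |g s - g t| ≤ l * |s - t|) →
      Measurable f₁ → Measurable f₂ →
      (∃ M : ℝ, ∀ t ∈ Set.Icc (0 : ℝ) T, |f₁ t| ≤ M) →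
      (∃ M : ℝ, ∀ t ∈ Set.Icc (0 : ℝ) T, |f₂ t| ≤ M) →
      |(∫ t in (0 : ℝ)..T, f₁ t * deriv g t) - ∫ t in (0 : ℝ)..T, f₂ t * deriv g t| ≤
        T * l * ⨆ t : Set.Icc (0 : ℝ) T, |f₁ t.1 - f₂ t.1|) ∧
    (∀ f g₁ g₂ : ℝ → ℝ,
      (∀ s t, |f s - f t| ≤ l * |s - t|) →
      (∀ t ∈ Set.Icc (0 : ℝ) T, |f t| ≤ b) →
      (∀ s t, |g₁ s - g₁ t| ≤ l * |s - t|) →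
      (∀ s t, |g₂ s - g₂ t| ≤ l * |s - t|) →
      |(∫ t in (0 : ℝ)..T, f t * deriv g₁ t) - ∫ t in (0 : ℝ)..T, f t * deriv g₂ t| ≤
        (2 * b + T * l) * ⨆ t : Set.Icc (0 : ℝ) T, |g₁ t.1 - g₂ t.1|) := by
  refine ⟨?_, ?_, ?_⟩
  · rintro g ⟨K, hg⟩
    exact (lipschitzWith_of_abs_sub_le hg).ae_differentiableAt
  · intro g f₁ f₂ hg hf₁ hf₂ hb₁ hb₂
    exact abs_integral_mul_deriv_sub_le hT hl hg hf₁ hf₂ hb₁ hb₂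
  · intro f g₁ g₂ hf hfb hg₁ hg₂
    exact abs_integral_mul_deriv_sub_le_of_lipschitz hT hl hf hfb hg₁ hg₂
end

section
/- Let T be a d×d row-stochastic matrix (nonnegative entries, each row summing to 1) that is irreducible (for every pair of indices i, j there exists n ≥ 1 with (Tⁿ)_{ij} > 0), and let ϖ ∈ ℝ^d be its invariant probability vector, ϖᵀ T = ϖᵀ. Then for every m ≥ 1 and every F : {1,…,d} → ℝ^m with Σ_{i=1}^d ϖ_i F(i) = 0, there exists H : {1,…,d} → ℝ^m solving Poisson's equation H(i) − Σ_{j=1}^d T_{ij} H(j) = F(i) for all i. -/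
open Matrix

/-- If `P` is row-stochastic, `P *ᵥ h = h` and `h` is maximal at `i`, then `h` takes the same value
at every index that `P` reaches from `i`. -/
theorem eq_of_mulVec_eq_self_of_isMax {ι : Type*} [Fintype ι] [DecidableEq ι]
    {P : Matrix ι ι ℝ} (hP : P ∈ rowStochastic ℝ ι) {h : ι → ℝ} (hh : P *ᵥ h = h)
    {i j : ι} (hi : ∀ k, h k ≤ h i) (hij : 0 < P i j) : h j = h i := by
  have hsum : ∑ k, P i k * (h i - h k) = 0 := by
    have h1 : ∑ k, P i k * h k = h i := congrFun hh i
    simp only [mul_sub, Finset.sum_sub_distrib, ← Finset.sum_mul, h1]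
    rw [sum_row_of_mem_rowStochastic hP, one_mul, sub_self]
  have hterm := (Finset.sum_eq_zero_iff_of_nonneg fun k _ =>
    mul_nonneg (nonneg_of_mem_rowStochastic hP) (sub_nonneg.2 (hi k))).1 hsum j (Finset.mem_univ j)
  rcases mul_eq_zero.1 hterm with h0 | h0
  · exact absurd h0 hij.ne'
  · linarith

/-- Harmonic functions of a finite irreducible Markov chain are constant. -/
theorem exists_eq_const_of_mulVec_eq_self {ι : Type*} [Fintype ι] [DecidableEq ι] [Nonempty ι]
    {T : Matrix ι ι ℝ} (hT : T ∈ rowStochastic ℝ ι)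
    (hirr : ∀ i j, ∃ n : ℕ, 1 ≤ n ∧ 0 < (T ^ n) i j) {h : ι → ℝ} (hh : T *ᵥ h = h) :
    ∃ c, ∀ j, h j = c := by
  obtain ⟨i, hi⟩ := Finite.exists_max h
  refine ⟨h i, fun j => ?_⟩
  obtain ⟨n, -, hn⟩ := hirr i j
  have hpow : ∀ k : ℕ, (T ^ k) *ᵥ h = h := by
    intro k
    induction k with
    | zero => simp
    | succ k ih => rw [pow_succ, ← mulVec_mulVec, hh, ih]
  exact eq_of_mulVec_eq_self_of_isMax (pow_mem hT n) (hpow n) hi hn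

/-- Scalar Poisson equation for a finite irreducible Markov chain. -/
theorem exists_sub_mulVec_eq {ι : Type*} [Fintype ι] [DecidableEq ι] [Nonempty ι]
    {T : Matrix ι ι ℝ} (hT : T ∈ rowStochastic ℝ ι)
    (hirr : ∀ i j, ∃ n : ℕ, 1 ≤ n ∧ 0 < (T ^ n) i j)
    {ϖ : ι → ℝ} (hϖ1 : ∑ i, ϖ i = 1) (hinv : ϖ ᵥ* T = ϖ) {f : ι → ℝ} (hf : ϖ ⬝ᵥ f = 0) :
    ∃ h : ι → ℝ, h - T *ᵥ h = f := by
  let L : (ι → ℝ) →ₗ[ℝ] (ι → ℝ) := (1 - T + replicateRow ι ϖ).mulVecLin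
  have hL : ∀ h, L h = h - T *ᵥ h + fun _ => ϖ ⬝ᵥ h := by
    intro h
    ext i
    simp [L]
    rfl
  have hmean : ∀ h, ϖ ⬝ᵥ L h = ϖ ⬝ᵥ h := by
    intro h
    rw [hL, dotProduct_add, dotProduct_sub, dotProduct_mulVec, hinv, sub_self, zero_add]
    simp only [dotProduct, ← Finset.sum_mul, hϖ1, one_mul]
  have hsub : ∀ h g, L h = g → ϖ ⬝ᵥ g = 0 → h - T *ᵥ h = g ∧ ϖ ⬝ᵥ h = 0 := by
    rintro h _ rfl hg
    rw [hmean] at hg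
    refine ⟨?_, hg⟩
    ext i
    simp [hL, hg]
  have hinj : Function.Injective L := by
    refine (injective_iff_map_eq_zero L).2 fun h hh => ?_
    obtain ⟨h1, h2⟩ := hsub h 0 hh (dotProduct_zero ϖ)
    obtain ⟨c, hc⟩ := exists_eq_const_of_mulVec_eq_self hT hirr (sub_eq_zero.1 h1).symm
    have hc0 : c = 0 := by
      simpa only [dotProduct, hc, ← Finset.sum_mul, hϖ1, one_mul] using h2
    ext j
    simp [hc, hc0]
  obtain ⟨h, hh⟩ := LinearMap.injective_iff_surjective.1 hinj f
  exact ⟨h, (hsub h f hh hf).1⟩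

/-- Solvability of Poisson's equation for zero-mean functions of a finite
irreducible Markov chain. -/
theorem stmt18 {d : ℕ} [NeZero d]
    (T : Matrix (Fin d) (Fin d) ℝ)
    (hT0 : ∀ i j, 0 ≤ T i j) (hT1 : ∀ i, ∑ j, T i j = 1)
    (hirr : ∀ i j, ∃ n : ℕ, 1 ≤ n ∧ 0 < (T ^ n) i j)
    (ϖ : Fin d → ℝ) (hϖ0 : ∀ i, 0 ≤ ϖ i) (hϖ1 : ∑ i, ϖ i = 1)
    (hinv : Matrix.vecMul ϖ T = ϖ)
    (m : ℕ) (hm : 1 ≤ m) (F : Fin d → Fin m → ℝ)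
    (hF : ∑ i, ϖ i • F i = 0) :
    ∃ H : Fin d → Fin m → ℝ, ∀ i, H i - ∑ j, T i j • H j = F i := by
  have hT : T ∈ rowStochastic ℝ (Fin d) := mem_rowStochastic_iff_sum.2 ⟨hT0, hT1⟩
  have hcol : ∀ k, ∃ h : Fin d → ℝ, h - T *ᵥ h = fun i => F i k := fun k =>
    exists_sub_mulVec_eq hT hirr hϖ1 hinv (by simpa [dotProduct] using congrFun hF k)
  choose h hh using hcol
  refine ⟨fun i k => h k i, fun i => ?_⟩
  ext k
  simpa [mulVec, dotProduct] using congrFun (hh k) i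
end
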